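/- arXiv:1012.5268 — 3 statements merged into one kernel-verified Lean document; each statement's English description precedes it below -/
import Mathlib

section
/- The map Φ(x,y) := (2xy, x²+y²−1) sends every (x,y) ∈ (−1,1)² with x ≠ y and x ≠ −y into Ω, and the restriction of Φ to {(x,y) : −1 < x < y < 1, x+y > 0} is a bijection onto Ω. Moreover, for every γ > −1 and every f integrable with respect to W_γ on Ω, ∫_Ω f(u,v) W_γ(u,v) du dv = ∫_{[−1,1]²} f(2xy, x²+y²−1) 𝒲_γ(x,y) dx dy, where 𝒲_γ(x,y) := W_γ(2xy, x²+y²−1) · |x²−y²|. -/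
open MeasureTheory Real Set Filter
open scoped ENNReal

noncomputable section

/-- The parabolic-type domain `Ω`, the image of the triangle `-1 < x < y < 1`
under `(x, y) ↦ (x + y, x y)`. -/
def omegaDom : Set (ℝ × ℝ) :=
  {q | ∃ x y : ℝ, -1 < x ∧ x < y ∧ y < 1 ∧ q = (x + y, x * y)}

/-- The square `[-1,1]²`. -/
def sqDom : Set (ℝ × ℝ) := Icc (-1 : ℝ) 1 ×ˢ Icc (-1 : ℝ) 1

/-- The open triangle `-1 < x < y < 1`. -/
def triDom : Set (ℝ × ℝ) := {q | -1 < q.1 ∧ q.1 < q.2 ∧ q.2 < 1}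

/-- The smaller root `x(u,v)` of `t² - u t + v = 0`. -/
def xRoot (q : ℝ × ℝ) : ℝ := (q.1 - Real.sqrt (q.1 ^ 2 - 4 * q.2)) / 2

/-- The larger root `y(u,v)` of `t² - u t + v = 0`. -/
def yRoot (q : ℝ × ℝ) : ℝ := (q.1 + Real.sqrt (q.1 ^ 2 - 4 * q.2)) / 2

/-- Evaluation of a two-variable polynomial at a point of `ℝ²`. -/
def evalP (P : MvPolynomial (Fin 2) ℝ) (q : ℝ × ℝ) : ℝ :=
  MvPolynomial.eval ![q.1, q.2] P

/-- The space `V_n(W)` of orthogonal polynomials of degree `n` for the weight `W`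
on the domain `D`: polynomials of exact total degree `n` orthogonal to all
polynomials of lower degree. -/
def Vpoly (D : Set (ℝ × ℝ)) (W : ℝ × ℝ → ℝ) (n : ℕ) : Set (MvPolynomial (Fin 2) ℝ) :=
  {P | P.totalDegree = n ∧ ∀ Q : MvPolynomial (Fin 2) ℝ, Q.totalDegree < n →
    (∫ q in D, evalP P q * evalP Q q * W q) = 0}

/-- `Q 0, …, Q n` is an orthonormal basis of `V_n(W)` on `D`. -/
def isONBVn (D : Set (ℝ × ℝ)) (W : ℝ × ℝ → ℝ) (n : ℕ)
    (Q : ℕ → MvPolynomial (Fin 2) ℝ) : Prop :=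
  (∀ k, k ≤ n → Q k ∈ Vpoly D W n) ∧
  (∀ k, k ≤ n → ∀ j, j ≤ n →
    (∫ q in D, evalP (Q k) q * evalP (Q j) q * W q) = if k = j then 1 else 0) ∧
  (∀ R ∈ Vpoly D W n, R ∈ Submodule.span ℝ (Q '' Set.Iic n))

/-- `K` is the reproducing kernel of `Π_n²` in `L²(W)` on the domain `D`:
it is a polynomial function, for each fixed `x ∈ D` it is a polynomial of total
degree `≤ n` in the second variable, and it reproduces every polynomial of total
degree `≤ n`. -/
def IsRK (D : Set (ℝ × ℝ)) (W : ℝ × ℝ → ℝ) (n : ℕ) (K : ℝ × ℝ → ℝ × ℝ → ℝ) : Prop :=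
  (∃ KP : MvPolynomial (Fin 4) ℝ,
    ∀ x y : ℝ × ℝ, K x y = MvPolynomial.eval ![x.1, x.2, y.1, y.2] KP) ∧
  (∀ x ∈ D, ∃ P : MvPolynomial (Fin 2) ℝ, P.totalDegree ≤ n ∧ ∀ y, K x y = evalP P y) ∧
  (∀ P : MvPolynomial (Fin 2) ℝ, P.totalDegree ≤ n →
    ∀ x ∈ D, (∫ y in D, K x y * evalP P y * W y) = evalP P x)

/-- `p` is the sequence of orthonormal polynomials with respect to the weight `w`
on `[-1,1]`: `p n` has degree exactly `n`, positive leading coefficient, and the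
`p n` are orthonormal in `L²(w)`. -/
def IsONPS (w : ℝ → ℝ) (p : ℕ → Polynomial ℝ) : Prop :=
  (∀ n, (p n).natDegree = n) ∧ (∀ n, 0 < (p n).leadingCoeff) ∧
  (∀ n m, (∫ x in Icc (-1:ℝ) 1, (p n).eval x * (p m).eval x * w x)
    = if n = m then 1 else 0)

/-- The Christoffel–Darboux kernel `k_n(x,y) = ∑_{j=0}^n p_j(x) p_j(y)`. -/
def CDK (p : ℕ → Polynomial ℝ) (n : ℕ) (x y : ℝ) : ℝ :=
  ∑ j ∈ Finset.range (n + 1), (p j).eval x * (p j).eval y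

/-- The Jacobi factor `J_{a,b}(x) = (1-x)^a (1+x)^b`. -/
def Jw (a b : ℝ) (x : ℝ) : ℝ := (1 - x) ^ a * (1 + x) ^ b

/-- The factor `J*_{a,b}(u,v) = (1-u+v)^a (1+u+v)^b` on `Ω`. -/
def JstarW (a b : ℝ) (q : ℝ × ℝ) : ℝ := (1 - q.1 + q.2) ^ a * (1 + q.1 + q.2) ^ b

/-- Modulus of continuity of `ψ` on `[-1,1]`. -/
def modCont (ψ : ℝ → ℝ) (t : ℝ) : ℝ :=
  sSup {d : ℝ | ∃ x ∈ Icc (-1:ℝ) 1, ∃ y ∈ Icc (-1:ℝ) 1, |x - y| ≤ t ∧ d = |ψ x - ψ y|}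

/-- The generalized Jacobi class `GJ`. -/
def IsGJ (w : ℝ → ℝ) : Prop :=
  ∃ (r : ℕ) (ψ : ℝ → ℝ) (γ₀ γ₁ : ℝ) (γs xs : Fin r → ℝ),
    -1 < γ₀ ∧ -1 < γ₁ ∧ (∀ i, -1 < γs i) ∧
    StrictMono xs ∧ (∀ i, xs i ∈ Ioo (-1:ℝ) 1) ∧
    ContinuousOn ψ (Icc (-1:ℝ) 1) ∧ (∀ x ∈ Icc (-1:ℝ) 1, 0 < ψ x) ∧
    IntegrableOn (fun t => modCont ψ t / t) (Ioc (0:ℝ) 1) ∧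
    (∀ x : ℝ, |x| ≤ 1 → w x = ψ x * (1 - x) ^ γ₀ * (1 + x) ^ γ₁ * ∏ i, |x - xs i| ^ γs i) ∧
    (∀ x : ℝ, 1 < |x| → w x = 0)

/-- The `L^p`-norm `‖f‖_{w,e}` on `[-1,1]` (as an extended nonnegative real). -/
def lpnormI (w : ℝ → ℝ) (e : ℝ) (f : ℝ → ℝ) : ℝ≥0∞ :=
  (∫⁻ x in Icc (-1:ℝ) 1, ENNReal.ofReal (|f x| ^ e * w x)) ^ (1 / e)

/-- The `L^p`-norm `‖f‖_{W,e}` on a planar domain `D` (as an extended nonnegative real). -/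
def lpnormD (D : Set (ℝ × ℝ)) (W : ℝ × ℝ → ℝ) (e : ℝ) (f : ℝ × ℝ → ℝ) : ℝ≥0∞ :=
  (∫⁻ q in D, ENNReal.ofReal (|f q| ^ e * W q)) ^ (1 / e)

/-- The operator `s_n^{i,j}(w; f, x)` built from the Christoffel–Darboux kernel of the
orthonormal polynomials `pij` of the weight `J_{i,j} w`. -/
def snOp (w : ℝ → ℝ) (pij : ℕ → Polynomial ℝ) (i j : ℝ) (n : ℕ) (f : ℝ → ℝ) (x : ℝ) : ℝ :=
  Jw (i/2) (j/2) x * ∫ y in Icc (-1:ℝ) 1, f y * CDK pij n x y * Jw (i/2) (j/2) y * w y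

/-- Substitution `(x, y) ↦ (2 x y, x² + y² - 1)` on two-variable polynomials. -/
def quadSub (P : MvPolynomial (Fin 2) ℝ) : MvPolynomial (Fin 2) ℝ :=
  MvPolynomial.aeval
    ![2 * MvPolynomial.X 0 * MvPolynomial.X 1,
      MvPolynomial.X 0 ^ 2 + MvPolynomial.X 1 ^ 2 - 1] P

/-- A one-variable polynomial viewed as a polynomial in the first variable. -/
def polyX (q : Polynomial ℝ) : MvPolynomial (Fin 2) ℝ :=
  Polynomial.aeval (MvPolynomial.X 0) q

/-- A one-variable polynomial viewed as a polynomial in the second variable. -/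
def polyY (q : Polynomial ℝ) : MvPolynomial (Fin 2) ℝ :=
  Polynomial.aeval (MvPolynomial.X 1) q

lemma aux_maps (x y : ℝ) (hx : x ∈ Ioo (-1:ℝ) 1) (hy : y ∈ Ioo (-1:ℝ) 1) (h1 : x ≠ y)
    (h2 : x ≠ -y) : (2*x*y, x^2 + y^2 - 1) ∈ omegaDom := by
  obtain ⟨hx1, hx2⟩ := hx
  obtain ⟨hy1, hy2⟩ := hy
  have hp : 0 < (1 - x^2) * (1 - y^2) := by
    apply mul_pos <;> nlinarith
  have hs := Real.sqrt_pos.2 hp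
  have hsq := Real.sq_sqrt hp.le
  set s := Real.sqrt ((1 - x^2) * (1 - y^2)) with hsd
  have d1 : 0 < (x - y)^2 := by
    have := sub_ne_zero.2 h1
    positivity
  have d2 : 0 < (x + y)^2 := by
    have : x + y ≠ 0 := fun h => h2 (by linarith)
    positivity
  have e1 : 0 < 1 - x * y := by nlinarith
  have e2 : 0 < 1 + x * y := by nlinarith
  have f1 : s < 1 - x * y := by
    apply lt_of_pow_lt_pow_left₀ 2 e1.le
    nlinarith
  have f2 : s < 1 + x * y := by
    apply lt_of_pow_lt_pow_left₀ 2 e2.le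
    nlinarith
  refine ⟨x * y - s, x * y + s, by linarith, by linarith, by linarith, ?_⟩
  ext
  · simp; ring
  · simp only
    nlinarith

def regT : Set (ℝ × ℝ) := {q : ℝ × ℝ | -1 < q.1 ∧ q.1 < q.2 ∧ q.2 < 1 ∧ 0 < q.1 + q.2}

def phiMap (q : ℝ × ℝ) : ℝ × ℝ := (2*q.1*q.2, q.1^2 + q.2^2 - 1)

lemma aux_bij : Set.BijOn phiMap regT omegaDom := by
  refine ⟨?_, ?_, ?_⟩
  · rintro ⟨x, y⟩ ⟨h1, h2, h3, h4⟩
    simp only at h1 h2 h3 h4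
    exact aux_maps x y ⟨h1, by linarith⟩ ⟨by linarith, h3⟩ h2.ne (by intro h; linarith)
  · rintro ⟨x, y⟩ ⟨h1, h2, h3, h4⟩ ⟨x', y'⟩ ⟨h1', h2', h3', h4'⟩ h
    simp only [phiMap, Prod.mk.injEq] at h h1 h2 h3 h4 h1' h2' h3' h4'
    obtain ⟨ha, hb⟩ := h
    have hs : x + y = x' + y' := by
      apply (pow_left_inj₀ h4.le h4'.le two_ne_zero).1
      nlinarith
    have hd : y - x = y' - x' := by
      apply (pow_left_inj₀ (by linarith) (by linarith) two_ne_zero).1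
      nlinarith
    ext <;> simp only <;> linarith
  · rintro q ⟨r, t, h1, h2, h3, rfl⟩
    have hA : 0 < (1 + r) * (1 + t) := mul_pos (by linarith) (by linarith)
    have hB : 0 < (1 - r) * (1 - t) := mul_pos (by linarith) (by linarith)
    have sA := Real.sqrt_pos.2 hA
    have sB := Real.sqrt_pos.2 hB
    have qA := Real.sq_sqrt hA.le
    have qB := Real.sq_sqrt hB.le
    set A := Real.sqrt ((1 + r) * (1 + t))
    set B := Real.sqrt ((1 - r) * (1 - t))
    have hrt : r * t < 1 := by nlinarith
    have hAB : A * B < 1 - r * t := by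
      apply lt_of_pow_lt_pow_left₀ 2 (by linarith)
      rw [mul_pow, qA, qB]
      have : 0 < (t - r)^2 := by
        have := sub_pos.2 h2
        positivity
      nlinarith
    have hlt : A + B < 2 := by
      apply lt_of_pow_lt_pow_left₀ 2 (by norm_num)
      nlinarith
    refine ⟨((A - B)/2, (A + B)/2), ⟨?_, ?_, ?_, ?_⟩, ?_⟩
    · simp only; linarith
    · simp only; linarith
    · simp only; linarith
    · simp only; linarith
    · simp only [phiMap, Prod.mk.injEq]
      constructor <;> nlinarith

def phiDeriv (q : ℝ × ℝ) : ℝ × ℝ →L[ℝ] ℝ × ℝ :=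
  (Matrix.toLin (.finTwoProd ℝ) (.finTwoProd ℝ)
    !![2 * q.2, 2 * q.1; 2 * q.1, 2 * q.2]).toContinuousLinearMap

lemma phi_hasFDerivAt (q : ℝ × ℝ) : HasFDerivAt phiMap (phiDeriv q) q := by
  unfold phiDeriv
  rw [Matrix.toLin_finTwoProd_toContinuousLinearMap]
  have h1 : HasFDerivAt (fun q : ℝ × ℝ => q.1) (ContinuousLinearMap.fst ℝ ℝ ℝ) q := hasFDerivAt_fst
  have h2 : HasFDerivAt (fun q : ℝ × ℝ => q.2) (ContinuousLinearMap.snd ℝ ℝ ℝ) q := hasFDerivAt_snd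
  have := HasFDerivAt.prodMk (𝕜 := ℝ) ((h1.const_mul 2).mul h2)
    (((h1.pow 2).add (h2.pow 2)).sub_const 1)
  refine HasFDerivAt.congr_fderiv this ?_
  ext <;> simp [mul_comm]

lemma phi_det (q : ℝ × ℝ) : (phiDeriv q).det = 4 * (q.2^2 - q.1^2) := by
  unfold phiDeriv
  simp only [LinearMap.det_toContinuousLinearMap, LinearMap.det_toLin, Matrix.det_fin_two_of]
  ring

lemma regT_meas : MeasurableSet regT := by
  have : IsOpen regT := by
    unfold regT
    repeat' (first | apply isOpen_lt | apply IsOpen.and)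
    all_goals fun_prop
  exact this.measurableSet

/-- doubling lemma -/
lemma aux_double (h : ℝ × ℝ → ℝ) (σ : ℝ × ℝ → ℝ × ℝ) (hσ : MeasurePreserving σ volume volume)
    (hσe : MeasurableEmbedding σ) (hinv : ∀ q, h (σ q) = h q) (S A : Set (ℝ × ℝ))
    (hA : MeasurableSet A) (hdis : ∀ q ∈ A, σ q ∉ A)
    (hS : ∀ᵐ q : ℝ × ℝ, q ∈ S ↔ (q ∈ A ∨ σ q ∈ A)) (hi : IntegrableOn h A) :
    IntegrableOn h S ∧ ∫ q in S, h q = 2 * ∫ q in A, h q := by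
  have hae : S =ᵐ[volume] (A ∪ σ ⁻¹' A : Set (ℝ × ℝ)) := by
    filter_upwards [hS] with q hq
    exact propext hq
  have hcomp : h ∘ σ = h := funext hinv
  have hi2 : IntegrableOn h (σ ⁻¹' A) := by
    have := (hσ.integrableOn_comp_preimage hσe (f := h) (s := A)).2 hi
    rwa [hcomp] at this
  have he : ∫ q in σ ⁻¹' A, h q = ∫ q in A, h q := by
    have := hσ.setIntegral_preimage_emb hσe h A
    simpa only [hinv] using this
  refine ⟨(integrableOn_congr_set_ae hae).2 (hi.union hi2), ?_⟩
  rw [setIntegral_congr_set hae, setIntegral_union _ (hσ.measurable hA) hi hi2, he]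
  · ring
  · rw [Set.disjoint_left]
    exact fun q hq hq' => hdis q hq hq'

lemma ae_graph (φ : ℝ → ℝ) (hφ : Measurable φ) : ∀ᵐ q : ℝ × ℝ, q.2 ≠ φ q.1 := by
  rw [ae_iff]
  simp only [ne_eq, not_not]
  have hm : MeasurableSet {a : ℝ × ℝ | a.2 = φ a.1} :=
    measurableSet_eq_fun measurable_snd (hφ.comp measurable_fst)
  rw [Measure.volume_eq_prod, Measure.measure_prod_null hm]
  refine Filter.Eventually.of_forall fun x => ?_
  have : (Prod.mk x ⁻¹' {a : ℝ × ℝ | a.2 = φ a.1}) = {φ x} := by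
    ext y; simp
  beta_reduce
  rw [this]
  simp

lemma ae_fst (c : ℝ) : ∀ᵐ q : ℝ × ℝ, q.1 ≠ c := by
  have : ∀ᵐ x : ℝ, x ≠ c := by simp [ae_iff]
  rw [Measure.volume_eq_prod]
  exact Measure.quasiMeasurePreserving_fst.ae this

lemma mp_swap : MeasurePreserving (Prod.swap : ℝ × ℝ → ℝ × ℝ) volume volume :=
  Measure.measurePreserving_swap

lemma me_swap : MeasurableEmbedding (Prod.swap : ℝ × ℝ → ℝ × ℝ) :=
  MeasurableEquiv.prodComm.measurableEmbedding

lemma mp_neg : MeasurePreserving (fun q : ℝ × ℝ => -q) volume volume :=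
  Measure.measurePreserving_neg _

lemma me_neg : MeasurableEmbedding (fun q : ℝ × ℝ => -q) :=
  (MeasurableEquiv.neg (ℝ × ℝ)).measurableEmbedding

lemma aux_four (h : ℝ × ℝ → ℝ) (h1 : ∀ q, h q.swap = h q) (h2 : ∀ q, h (-q) = h q)
    (hi : IntegrableOn h regT) : ∫ q in sqDom, h q = 4 * ∫ q in regT, h q := by
  obtain ⟨i1, e1⟩ := aux_double h Prod.swap mp_swap me_swap h1
    {q : ℝ × ℝ | (-1 < q.1 ∧ -1 < q.2) ∧ q.1 < 1 ∧ q.2 < 1 ∧ 0 < q.1 + q.2} regT regT_meas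
    (by
      rintro ⟨x, y⟩ ⟨a1, a2, a3, a4⟩ ⟨b1, b2, b3, b4⟩
      simp at *
      linarith)
    (by
      filter_upwards [ae_graph id measurable_id] with q hq
      simp only [id] at hq
      simp only [regT, mem_setOf_eq, Prod.fst_swap, Prod.snd_swap]
      constructor
      · rintro ⟨_, a, b, c⟩
        rcases lt_or_gt_of_ne hq with hq | hq
        · right; exact ⟨by linarith, hq, a, by linarith⟩
        · left; exact ⟨by linarith, hq, b, by linarith⟩
      · rintro (⟨a, b, c, d⟩ | ⟨a, b, c, d⟩)
        · exact ⟨⟨a, by linarith⟩, by linarith, c, d⟩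
        · exact ⟨⟨by linarith, a⟩, c, by linarith, by linarith⟩) hi
  obtain ⟨i2, e2⟩ := aux_double h (fun q => -q) mp_neg me_neg h2
    (sqDom) ({q : ℝ × ℝ | (-1 < q.1 ∧ -1 < q.2) ∧ q.1 < 1 ∧ q.2 < 1 ∧ 0 < q.1 + q.2})
    (by
      have : IsOpen {q : ℝ × ℝ | (-1 < q.1 ∧ -1 < q.2) ∧ q.1 < 1 ∧ q.2 < 1 ∧ 0 < q.1 + q.2} := by
        repeat' (first | apply isOpen_lt | apply IsOpen.and)
        all_goals fun_prop
      exact this.measurableSet)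
    (by
      rintro ⟨x, y⟩ ⟨a0, a1, a2, a3⟩ ⟨b0, b1, b2, b3⟩
      simp at *
      linarith)
    (by
      filter_upwards [ae_graph (fun x => -x) measurable_neg, ae_graph (fun _ => 1) measurable_const,
        ae_graph (fun _ => -1) measurable_const, ae_fst 1, ae_fst (-1)] with q g0 g1 g2 g3 g4
      simp only [sqDom, mem_prod, mem_Icc, mem_setOf_eq, Prod.fst_neg, Prod.snd_neg]
      constructor
      · rintro ⟨⟨a, b⟩, c, d⟩
        have a' := lt_of_le_of_ne a g4.symm
        have b' := lt_of_le_of_ne b g3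
        have c' := lt_of_le_of_ne c g2.symm
        have d' := lt_of_le_of_ne d g1
        rcases lt_or_gt_of_ne g0 with hq | hq
        · right; refine ⟨⟨?_, ?_⟩, ?_, ?_, ?_⟩ <;> linarith
        · left; refine ⟨⟨?_, ?_⟩, ?_, ?_, ?_⟩ <;> linarith
      · rintro (⟨⟨a, b⟩, c, d, e⟩ | ⟨⟨a, b⟩, c, d, e⟩)
        · refine ⟨⟨?_, ?_⟩, ?_, ?_⟩ <;> linarith
        · refine ⟨⟨?_, ?_⟩, ?_, ?_⟩ <;> linarith) i1
  rw [e2, e1]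
  ring

/-- the quadratic map `Φ(x,y) = (2xy, x²+y²-1)` maps into `Ω`, is a
bijection from `{-1 < x < y < 1, x + y > 0}` onto `Ω`, and transfers the weight
`W_γ` on `Ω` to `𝒲_γ` on `[-1,1]²`. -/
theorem stmt_1
    (w : ℝ → ℝ) (hw0 : ∀ x, 0 ≤ w x)
    (hwi : IntegrableOn w (Icc (-1:ℝ) 1))
    (hw1 : (∫ x in Icc (-1:ℝ) 1, w x) = 1)
    (hwm : ∀ k : ℕ, IntegrableOn (fun x => x ^ k * w x) (Icc (-1:ℝ) 1))
    (γ : ℝ) (hγ : -1 < γ)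
    (a : ℝ) (ha0 : 0 < a)
    (ha : (∫ q in sqDom, a * w q.1 * w q.2 * |q.1 - q.2| ^ (2 * γ + 1)) = 1)
    (W : ℝ × ℝ → ℝ)
    (hW : ∀ q : ℝ × ℝ, W q = 2 * a * w (xRoot q) * w (yRoot q) * (q.1 ^ 2 - 4 * q.2) ^ γ)
    (CW : ℝ × ℝ → ℝ)
    (hCW : ∀ x y : ℝ, CW (x, y) = W (2*x*y, x^2 + y^2 - 1) * |x^2 - y^2|) :
    (∀ x y : ℝ, x ∈ Ioo (-1:ℝ) 1 → y ∈ Ioo (-1:ℝ) 1 → x ≠ y → x ≠ -y →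
      (2*x*y, x^2 + y^2 - 1) ∈ omegaDom) ∧
    Set.BijOn (fun q : ℝ × ℝ => (2*q.1*q.2, q.1^2 + q.2^2 - 1))
      {q : ℝ × ℝ | -1 < q.1 ∧ q.1 < q.2 ∧ q.2 < 1 ∧ 0 < q.1 + q.2} omegaDom ∧
    (∀ f : ℝ × ℝ → ℝ, IntegrableOn (fun q => f q * W q) omegaDom →
      (∫ q in omegaDom, f q * W q)
        = ∫ q in sqDom, f (2*q.1*q.2, q.1^2 + q.2^2 - 1) * CW q) := by
  refine ⟨aux_maps, aux_bij, ?_⟩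
  intro f hf
  have hdet : ∀ q, |(phiDeriv q).det| • (f (phiMap q) * W (phiMap q))
      = 4 * (f (2*q.1*q.2, q.1^2 + q.2^2 - 1) * CW q) := by
    rintro ⟨x, y⟩
    rw [phi_det, hCW, abs_mul, abs_sub_comm, smul_eq_mul]
    simp only [phiMap]
    norm_num
    ring
  have hd : ∀ q ∈ regT, HasFDerivWithinAt phiMap (phiDeriv q) regT q :=
    fun q _ => (phi_hasFDerivAt q).hasFDerivWithinAt
  rw [← aux_bij.image_eq] at hf ⊢
  rw [integrableOn_image_iff_integrableOn_abs_det_fderiv_smul volume regT_meas hd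
    aux_bij.injOn] at hf
  rw [integral_image_eq_integral_abs_det_fderiv_smul volume regT_meas hd aux_bij.injOn]
  simp only [hdet] at hf ⊢
  rw [aux_four, integral_const_mul]
  · rintro ⟨x, y⟩
    simp only [Prod.swap, hCW]
    rw [abs_sub_comm, show 2 * y * x = 2 * x * y by ring, add_comm (y^2)]
  · rintro ⟨x, y⟩
    simp only [Prod.neg_mk, hCW]
    rw [show 2 * -x * -y = 2 * x * y by ring, neg_sq, neg_sq]
  · have := hf.const_mul (1/4)
    refine this.congr (Filter.Eventually.of_forall fun q => ?_)
    simp only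
    ring
end
end

section
/- For 0 ≤ k ≤ n there exists a (necessarily unique) real polynomial P_{k,n} in two variables of total degree n such that P_{k,n}(x+y, xy) = (1/√2)(p_n(x) p_k(y) + p_n(y) p_k(x)) for all x, y when k < n, and P_{n,n}(x+y, xy) = p_n(x) p_n(y). These polynomials satisfy ∫_Ω P_{k,n}(u,v) P_{j,m}(u,v) W_{−1/2}(u,v) du dv = δ_{k,j} δ_{n,m} for all 0 ≤ k ≤ n, 0 ≤ j ≤ m; in particular, for each n, {P_{k,n} : 0 ≤ k ≤ n} is an orthonormal basis of V_n(W_{−1/2}). -/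
open MeasureTheory Real Set Filter
open scoped ENNReal

noncomputable section

lemma evalP_inj {P Q : MvPolynomial (Fin 2) ℝ}
    (h : ∀ x y : ℝ, evalP P (x + y, x * y) = evalP Q (x + y, x * y)) : P = Q := by
  refine MvPolynomial.funext_set (fun i : Fin 2 => if i = 0 then Set.univ else Set.Iic (0:ℝ)) ?_ ?_
  · intro i
    split_ifs
    · exact Set.infinite_univ
    · exact Set.Iic_infinite 0
  · intro z hz
    have h1 : z 1 ≤ 0 := by
      have := hz 1 (Set.mem_univ _)
      simpa using this
    have hs : 0 ≤ z 0 ^ 2 - 4 * z 1 := by nlinarith [sq_nonneg (z 0)]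
    have := h (xRoot (z 0, z 1)) (yRoot (z 0, z 1))
    have e1 : xRoot (z 0, z 1) + yRoot (z 0, z 1) = z 0 := by simp [xRoot, yRoot]; ring
    have e2 : xRoot (z 0, z 1) * yRoot (z 0, z 1) = z 1 := by
      simp only [xRoot, yRoot]
      have := Real.sq_sqrt hs
      nlinarith
    rw [e1, e2] at this
    have ez : ![z 0, z 1] = z := by ext i; fin_cases i <;> rfl
    simpa [evalP, ez] using this

lemma evalP_add (P Q : MvPolynomial (Fin 2) ℝ) (q) : evalP (P + Q) q = evalP P q + evalP Q q := by
  simp [evalP]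
lemma evalP_mul (P Q : MvPolynomial (Fin 2) ℝ) (q) : evalP (P * Q) q = evalP P q * evalP Q q := by
  simp [evalP]
lemma evalP_smul (c : ℝ) (Q : MvPolynomial (Fin 2) ℝ) (q) : evalP (c • Q) q = c * evalP Q q := by
  simp [evalP]
lemma evalP_sum {ι : Type*} (s : Finset ι) (f : ι → MvPolynomial (Fin 2) ℝ) (q) :
    evalP (∑ i ∈ s, f i) q = ∑ i ∈ s, evalP (f i) q := by
  simp [evalP]

/-- `R` represents the symmetrization of `f ⊗ g`. -/
def SymRep (f g : Polynomial ℝ) (R : MvPolynomial (Fin 2) ℝ) : Prop :=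
  ∀ x y : ℝ, evalP R (x + y, x * y) = f.eval x * g.eval y + f.eval y * g.eval x

lemma symRep_span (M : Submodule ℝ (MvPolynomial (Fin 2) ℝ)) (s : Set (Polynomial ℝ))
    (h : ∀ f ∈ s, ∀ g ∈ s, ∃ R ∈ M, SymRep f g R) (f g : Polynomial ℝ)
    (hf : f ∈ Submodule.span ℝ s) (hg : g ∈ Submodule.span ℝ s) : ∃ R ∈ M, SymRep f g R := by
  induction hf using Submodule.span_induction with
  | mem f hf =>
    induction hg using Submodule.span_induction with
    | mem g hg => exact h f hf g hg
    | zero => exact ⟨0, M.zero_mem, fun x y => by simp [evalP]⟩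
    | add a b _ _ ha hb =>
      obtain ⟨A, hA, hA'⟩ := ha
      obtain ⟨B, hB, hB'⟩ := hb
      exact ⟨A + B, M.add_mem hA hB, fun x y => by
        rw [evalP_add, hA', hB']; simp; ring⟩
    | smul c a _ ha =>
      obtain ⟨A, hA, hA'⟩ := ha
      exact ⟨c • A, M.smul_mem _ hA, fun x y => by
        rw [evalP_smul, hA']; simp; ring⟩
  | zero => exact ⟨0, M.zero_mem, fun x y => by simp [evalP]⟩
  | add a b _ _ ha hb =>
    obtain ⟨A, hA, hA'⟩ := ha
    obtain ⟨B, hB, hB'⟩ := hb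
    exact ⟨A + B, M.add_mem hA hB, fun x y => by
      rw [evalP_add, hA', hB']; simp; ring⟩
  | smul c a _ ha =>
    obtain ⟨A, hA, hA'⟩ := ha
    exact ⟨c • A, M.smul_mem _ hA, fun x y => by
      rw [evalP_smul, hA']; simp; ring⟩

lemma symRep_deg (M : Submodule ℝ (MvPolynomial (Fin 2) ℝ)) (p : ℕ → Polynomial ℝ)
    (hp : ∀ i, (p i).degree = i) (n : ℕ)
    (h : ∀ i ≤ n, ∀ j ≤ n, ∃ R ∈ M, SymRep (p i) (p j) R) (f g : Polynomial ℝ)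
    (hf : f.natDegree ≤ n) (hg : g.natDegree ≤ n) : ∃ R ∈ M, SymRep f g R := by
  have key := (Polynomial.Sequence.mk p hp).span_degreeLT (m := n + 1) (fun i _ => by
    rw [isUnit_iff_ne_zero, Polynomial.leadingCoeff_ne_zero]
    exact Polynomial.Sequence.ne_zero _ i)
  have hm : ∀ f : Polynomial ℝ, f.natDegree ≤ n → f ∈ Submodule.span ℝ (p '' Set.Iio (n+1)) := by
    intro f hf
    have : f ∈ Polynomial.degreeLT ℝ (n+1) := by
      rw [Polynomial.mem_degreeLT]
      exact lt_of_le_of_lt Polynomial.degree_le_natDegree (by exact_mod_cast Nat.lt_succ_of_le hf)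
    rw [← key] at this
    exact this
  refine symRep_span M _ ?_ f g (hm f hf) (hm g hg)
  rintro _ ⟨i, hi, rfl⟩ _ ⟨j, hj, rfl⟩
  exact h i (Nat.lt_succ_iff.mp hi) j (Nat.lt_succ_iff.mp hj)

lemma exists_psum (m : ℕ) : ∃ R : MvPolynomial (Fin 2) ℝ, R.totalDegree ≤ m ∧
    ∀ x y : ℝ, evalP R (x + y, x * y) = x ^ m + y ^ m := by
  induction m using Nat.twoStepInduction with
  | zero => exact ⟨MvPolynomial.C 2, by simp, fun x y => by simp [evalP]; norm_num⟩
  | one => exact ⟨MvPolynomial.X 0, by simp, fun x y => by simp [evalP]⟩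
  | more m h1 h2 =>
    obtain ⟨A, hA, hA'⟩ := h1
    obtain ⟨B, hB, hB'⟩ := h2
    refine ⟨MvPolynomial.X 0 * B - MvPolynomial.X 1 * A, ?_, fun x y => ?_⟩
    · refine (MvPolynomial.totalDegree_sub _ _).trans (max_le ?_ ?_)
      · refine (MvPolynomial.totalDegree_mul _ _).trans ?_
        rw [MvPolynomial.totalDegree_X]; omega
      · refine (MvPolynomial.totalDegree_mul _ _).trans ?_
        rw [MvPolynomial.totalDegree_X]; omega
    · have a := hA' x y
      have b := hB' x y
      simp only [evalP] at a b
      simp only [evalP, map_sub, map_mul, MvPolynomial.eval_X]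
      rw [a, b]
      simp
      ring

lemma exists_monSym (n i j : ℕ) (hi : i ≤ n) (hj : j ≤ n) :
    ∃ R ∈ MvPolynomial.restrictTotalDegree (Fin 2) ℝ n,
      SymRep (Polynomial.X ^ i) (Polynomial.X ^ j) R := by
  wlog hij : i ≤ j generalizing i j
  · obtain ⟨R, hR, hR'⟩ := this j i hj hi (by omega)
    exact ⟨R, hR, fun x y => by rw [hR']; ring⟩
  obtain ⟨A, hA, hA'⟩ := exists_psum (j - i)
  refine ⟨MvPolynomial.X 1 ^ i * A, ?_, fun x y => ?_⟩
  · rw [MvPolynomial.mem_restrictTotalDegree]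
    refine (MvPolynomial.totalDegree_mul _ _).trans ?_
    have := MvPolynomial.totalDegree_pow (MvPolynomial.X 1 : MvPolynomial (Fin 2) ℝ) i
    rw [MvPolynomial.totalDegree_X] at this
    omega
  · rw [evalP_mul, hA']
    obtain ⟨d, rfl⟩ := Nat.exists_eq_add_of_le hij
    simp [evalP]
    ring

lemma exists_symRep (n : ℕ) (f g : Polynomial ℝ) (hf : f.natDegree ≤ n) (hg : g.natDegree ≤ n) :
    ∃ R : MvPolynomial (Fin 2) ℝ, R.totalDegree ≤ n ∧ SymRep f g R := by
  obtain ⟨R, hR, h⟩ := symRep_deg (MvPolynomial.restrictTotalDegree (Fin 2) ℝ n)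
    (fun i => Polynomial.X ^ i) (by simp) n (fun i hi j hj => exists_monSym n i j hi hj) f g hf hg
  exact ⟨R, by rwa [MvPolynomial.mem_restrictTotalDegree] at hR, h⟩

lemma mem_of_symRep (M : Submodule ℝ (MvPolynomial (Fin 2) ℝ)) (n : ℕ)
    (h : ∀ f g : Polynomial ℝ, f.natDegree ≤ n → g.natDegree ≤ n → ∃ R ∈ M, SymRep f g R)
    (R : MvPolynomial (Fin 2) ℝ) (hR : R.totalDegree ≤ n) : R ∈ M := by
  rw [R.as_sum]
  refine Submodule.sum_mem _ fun d hd => ?_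
  have hd' : d 0 + d 1 ≤ n := by
    have := MvPolynomial.le_totalDegree hd
    rw [Finsupp.sum_fintype _ _ (by simp)] at this
    simp [Fin.sum_univ_two] at this
    omega
  have h' : ∀ a ∈ Finset.range (d 0 + 1), ∃ R ∈ M,
      SymRep (Polynomial.X ^ (a + d 1)) (Polynomial.X ^ (d 0 - a + d 1)) R := by
    intro a ha
    rw [Finset.mem_range] at ha
    refine h _ _ ?_ ?_
    · rw [Polynomial.natDegree_X_pow]; omega
    · rw [Polynomial.natDegree_X_pow]; omega
  choose! T hT hT' using h'
  have e : MvPolynomial.monomial d (R.coeff d) = ∑ a ∈ Finset.range (d 0 + 1),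
      (R.coeff d * ((d 0).choose a : ℝ) / 2) • T a := by
    apply evalP_inj
    intro x y
    rw [evalP_sum]
    have e1 : evalP (MvPolynomial.monomial d (R.coeff d)) (x + y, x * y)
        = R.coeff d * ((x + y) ^ d 0 * (x * y) ^ d 1) := by
      simp [evalP, MvPolynomial.eval_monomial, Finsupp.prod_fintype, Fin.prod_univ_two]
    rw [e1]
    have e2 : (x + y) ^ d 0 * (x * y) ^ d 1
        = (1/2) * ((x + y) ^ d 0 * (x * y) ^ d 1 + (y + x) ^ d 0 * (x * y) ^ d 1) := by
      rw [add_comm y x]; ring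
    rw [e2, add_pow, add_pow, Finset.sum_mul, Finset.sum_mul, ← Finset.sum_add_distrib,
      Finset.mul_sum, Finset.mul_sum]
    refine Finset.sum_congr rfl fun a ha => ?_
    rw [evalP_smul, hT' a ha]
    rw [Polynomial.eval_pow, Polynomial.eval_pow, Polynomial.eval_pow, Polynomial.eval_pow,
      Polynomial.eval_X, Polynomial.eval_X]
    simp only [pow_add, mul_pow]
    ring
  rw [e]
  exact Submodule.sum_mem _ fun a ha => M.smul_mem _ (hT a ha)

/-! Change of variables -/

lemma omegaDom_eq : omegaDom = (fun q : ℝ × ℝ => (q.1 + q.2, q.1 * q.2)) '' triDom := by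
  ext q
  constructor
  · rintro ⟨x, y, h1, h2, h3, rfl⟩
    exact ⟨(x, y), ⟨h1, h2, h3⟩, rfl⟩
  · rintro ⟨⟨x, y⟩, ⟨h1, h2, h3⟩, rfl⟩
    exact ⟨x, y, h1, h2, h3, rfl⟩

lemma triDom_open : IsOpen triDom := by
  unfold triDom
  exact (isOpen_lt continuous_const continuous_fst).inter
    ((isOpen_lt continuous_fst continuous_snd).inter (isOpen_lt continuous_snd continuous_const))

lemma integral_omega (g : ℝ × ℝ → ℝ) :
    ∫ q in omegaDom, g q = ∫ q in triDom, (q.2 - q.1) * g (q.1 + q.2, q.1 * q.2) := by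
  rw [omegaDom_eq]
  have hd : ∀ q ∈ triDom, HasFDerivWithinAt (fun q : ℝ × ℝ => (q.1 + q.2, q.1 * q.2))
      ((Matrix.toLin (.finTwoProd ℝ) (.finTwoProd ℝ)
        !![1, 1; q.2, q.1]).toContinuousLinearMap) triDom q := by
    intro q _
    apply HasFDerivAt.hasFDerivWithinAt
    rw [Matrix.toLin_finTwoProd_toContinuousLinearMap]
    have d1 : HasFDerivAt (fun q : ℝ × ℝ => q.1) (ContinuousLinearMap.fst ℝ ℝ ℝ) q := hasFDerivAt_fst
    have d2 : HasFDerivAt (fun q : ℝ × ℝ => q.2) (ContinuousLinearMap.snd ℝ ℝ ℝ) q := hasFDerivAt_snd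
    have d3 : HasFDerivAt (fun q : ℝ × ℝ => q.1 + q.2) _ q := d1.add d2
    have d4 : HasFDerivAt (fun q : ℝ × ℝ => q.1 * q.2) _ q := d1.mul d2
    convert! d3.prodMk d4 using 2
    · simp
    · simp [add_comm]
  rw [integral_image_eq_integral_abs_det_fderiv_smul volume triDom_open.measurableSet hd]
  · refine setIntegral_congr_fun triDom_open.measurableSet fun q hq => ?_
    have : |q.1 - q.2| = q.2 - q.1 := by
      rw [abs_sub_comm, abs_of_pos (sub_pos.2 hq.2.1)]
    simp [LinearMap.det_toLin, Matrix.det_fin_two_of, this]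
  · rintro ⟨a, b⟩ ⟨-, h1, -⟩ ⟨c, d⟩ ⟨-, h2, -⟩ h
    simp only [Prod.mk.injEq] at h h1 h2 ⊢
    obtain ⟨e1, e2⟩ := h
    have : (b - a) ^ 2 = (d - c) ^ 2 := by
      have : (a + b) ^ 2 = (c + d) ^ 2 := by rw [e1]
      nlinarith
    have := (pow_left_inj₀ (by linarith) (by linarith) (by norm_num)).1 this
    constructor <;> linarith

lemma integral_sq_sym (G : ℝ × ℝ → ℝ) (hG : IntegrableOn G sqDom)
    (hs : ∀ x y, G (x, y) = G (y, x)) : ∫ q in sqDom, G q = 2 * ∫ q in triDom, G q := by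
  have hdiag : volume {q : ℝ × ℝ | q.1 = q.2} = 0 := by
    have : {q : ℝ × ℝ | q.1 = q.2} =
        (LinearMap.ker (LinearMap.fst ℝ ℝ ℝ - LinearMap.snd ℝ ℝ ℝ) : Set (ℝ × ℝ)) := by
      ext q; simp [sub_eq_zero]
    rw [this]
    apply Measure.addHaar_submodule
    rw [Ne, LinearMap.ker_eq_top]
    intro h
    have : (LinearMap.fst ℝ ℝ ℝ - LinearMap.snd ℝ ℝ ℝ) (0, 1) = (0 : ℝ × ℝ →ₗ[ℝ] ℝ) (0, 1) := by
      rw [h]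
    simp at this
  have hb : (Ioo (-1:ℝ) 1 ×ˢ Ioo (-1:ℝ) 1 : Set (ℝ × ℝ)) =ᵐ[volume] sqDom :=
    Measure.set_prod_ae_eq Ioo_ae_eq_Icc Ioo_ae_eq_Icc
  set T' : Set (ℝ × ℝ) := Prod.swap ⁻¹' triDom with hT'
  have hun : (triDom ∪ T' : Set (ℝ × ℝ)) =ᵐ[volume] sqDom := by
    refine EventuallyEq.trans ?_ hb
    have hn : ∀ᵐ q : ℝ × ℝ, q.1 ≠ q.2 := by
      rw [ae_iff]; simpa using hdiag
    filter_upwards [hn] with q hq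
    apply propext
    change (q ∈ triDom ∪ T') ↔ q ∈ (Ioo (-1:ℝ) 1 ×ˢ Ioo (-1:ℝ) 1 : Set (ℝ × ℝ))
    simp only [hT', mem_union, mem_preimage, mem_prod, mem_Ioo, triDom, mem_ofPred_eq,
      Prod.fst_swap, Prod.snd_swap]
    constructor
    · rintro (⟨h1, h2, h3⟩ | ⟨h1, h2, h3⟩) <;> refine ⟨⟨?_, ?_⟩, ?_, ?_⟩ <;> linarith
    · rintro ⟨⟨h1, h2⟩, h3, h4⟩
      rcases lt_or_gt_of_ne hq with h | h
      · exact Or.inl ⟨h1, h, h4⟩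
      · exact Or.inr ⟨h3, h, h2⟩
  have hT'm : MeasurableSet T' := triDom_open.measurableSet.preimage measurable_swap
  have hdis : Disjoint triDom T' := by
    rw [Set.disjoint_left]
    rintro q ⟨_, h, _⟩ ⟨_, h', _⟩
    exact lt_asymm h h'
  have hGu : IntegrableOn G (triDom ∪ T') := hG.congr_set_ae hun
  rw [← setIntegral_congr_set hun, setIntegral_union hdis hT'm hGu.left_of_union hGu.right_of_union]
  have : ∫ q in T', G q = ∫ q in triDom, G q := by
    have h := (Measure.measurePreserving_swap (μ := (volume : Measure ℝ))
      (ν := (volume : Measure ℝ))).setIntegral_preimage_emb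
      MeasurableEquiv.prodComm.measurableEmbedding G triDom
    have e : (fun q : ℝ × ℝ => G q.swap) = G := by
      funext q; exact hs _ _
    rw [e] at h
    exact h
  rw [this]; ring

lemma evalP_cont (P : MvPolynomial (Fin 2) ℝ) :
    Continuous (fun q : ℝ × ℝ => evalP P (q.1 + q.2, q.1 * q.2)) := by
  unfold evalP
  refine (MvPolynomial.continuous_eval P).comp ?_
  refine continuous_pi fun i => ?_
  fin_cases i
  · simp; fun_prop
  · simp; fun_prop

lemma int_sq (w : ℝ → ℝ) (hwi : IntegrableOn w (Icc (-1:ℝ) 1)) (F : ℝ × ℝ → ℝ)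
    (hF : Continuous F) : IntegrableOn (fun q => F q * (w q.1 * w q.2)) sqDom := by
  refine IntegrableOn.continuousOn_mul hF.continuousOn ?_ (isCompact_Icc.prod isCompact_Icc)
  have := Integrable.mul_prod hwi hwi
  rw [Measure.prod_restrict] at this
  exact this

lemma integral_W (w : ℝ → ℝ) (hwi : IntegrableOn w (Icc (-1:ℝ) 1)) (W : ℝ × ℝ → ℝ)
    (hW : ∀ q : ℝ × ℝ, W q
      = 2 * w (xRoot q) * w (yRoot q) * (q.1 ^ 2 - 4 * q.2) ^ (-(1/2) : ℝ))
    (P : MvPolynomial (Fin 2) ℝ) :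
    ∫ q in omegaDom, evalP P q * W q
      = ∫ q in sqDom, evalP P (q.1 + q.2, q.1 * q.2) * (w q.1 * w q.2) := by
  rw [integral_omega, integral_sq_sym _ (int_sq w hwi _ (evalP_cont P)), ← integral_const_mul]
  · refine setIntegral_congr_fun triDom_open.measurableSet fun q hq => ?_
    have hpos : 0 < q.2 - q.1 := sub_pos.2 hq.2.1
    have e : (q.1 + q.2) ^ 2 - 4 * (q.1 * q.2) = (q.2 - q.1) ^ 2 := by ring
    have es : Real.sqrt ((q.2 - q.1) ^ 2) = q.2 - q.1 := Real.sqrt_sq hpos.le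
    have er : ((q.2 - q.1) ^ 2) ^ (-(1/2) : ℝ) = (q.2 - q.1)⁻¹ := by
      rw [Real.rpow_neg (sq_nonneg _), ← Real.sqrt_eq_rpow, es]
    simp only [hW, xRoot, yRoot, e, es, er]
    have e1 : (q.1 + q.2 - (q.2 - q.1)) / 2 = q.1 := by ring
    have e2 : (q.1 + q.2 + (q.2 - q.1)) / 2 = q.2 := by ring
    rw [e1, e2]
    field_simp
  · intro x y
    simp only [add_comm y x, mul_comm y x, mul_comm (w y)]

lemma int_four (w : ℝ → ℝ) (hwi : IntegrableOn w (Icc (-1:ℝ) 1)) (p : ℕ → Polynomial ℝ)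
    (hp : IsONPS w p) (n k m j : ℕ) :
    ∫ q in sqDom, (((p n).eval q.1 * (p k).eval q.2 + (p n).eval q.2 * (p k).eval q.1) *
      ((p m).eval q.1 * (p j).eval q.2 + (p m).eval q.2 * (p j).eval q.1)) * (w q.1 * w q.2)
    = 2 * ((if n = m then 1 else 0) * (if k = j then 1 else 0)
        + (if n = j then 1 else 0) * (if k = m then 1 else 0)) := by
  have base : ∀ a b c d : ℕ, ∫ q in sqDom, ((p a).eval q.1 * (p b).eval q.1 *
      ((p c).eval q.2 * (p d).eval q.2)) * (w q.1 * w q.2)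
      = (if a = b then 1 else 0) * (if c = d then 1 else 0) := by
    intro a b c d
    rw [← hp.2.2 a b, ← hp.2.2 c d]
    have := setIntegral_prod_mul (μ := (volume : Measure ℝ)) (ν := (volume : Measure ℝ))
      (fun x => (p a).eval x * (p b).eval x * w x)
      (fun x => (p c).eval x * (p d).eval x * w x) (Icc (-1:ℝ) 1) (Icc (-1:ℝ) 1)
    rw [← this]
    congr 1
    funext q
    ring
  have I : ∀ a b c d : ℕ, IntegrableOn (fun q : ℝ × ℝ => ((p a).eval q.1 * (p b).eval q.1 *
      ((p c).eval q.2 * (p d).eval q.2)) * (w q.1 * w q.2)) sqDom := by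
    intro a b c d
    apply int_sq w hwi
    fun_prop
  have e : (fun q : ℝ × ℝ => (((p n).eval q.1 * (p k).eval q.2 + (p n).eval q.2 * (p k).eval q.1) *
      ((p m).eval q.1 * (p j).eval q.2 + (p m).eval q.2 * (p j).eval q.1)) * (w q.1 * w q.2))
    = fun q => ((((p n).eval q.1 * (p m).eval q.1 *
      ((p k).eval q.2 * (p j).eval q.2)) * (w q.1 * w q.2) +
      ((p n).eval q.1 * (p j).eval q.1 *
      ((p k).eval q.2 * (p m).eval q.2)) * (w q.1 * w q.2)) +
      ((p k).eval q.1 * (p m).eval q.1 *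
      ((p n).eval q.2 * (p j).eval q.2)) * (w q.1 * w q.2)) +
      ((p k).eval q.1 * (p j).eval q.1 *
      ((p n).eval q.2 * (p m).eval q.2)) * (w q.1 * w q.2) := by
    funext q; ring
  rw [e]
  refine (integral_add (((I n m k j).add (I n j k m)).add (I k m n j)) (I k j n m)).trans ?_
  have e2 := integral_add ((I n m k j).add (I n j k m)) (I k m n j)
  have e3 := integral_add (I n m k j) (I n j k m)
  simp only [Pi.add_apply] at e2 e3 ⊢
  rw [e2, e3, base, base, base, base]
  ring

/-- normalizing constants -/
def cc (k n : ℕ) : ℝ := if k = n then 1/2 else (Real.sqrt 2)⁻¹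

/-- The weighted integral as a linear functional. -/
lemma exists_L (w : ℝ → ℝ) (hwi : IntegrableOn w (Icc (-1:ℝ) 1)) (W : ℝ × ℝ → ℝ)
    (hW : ∀ q : ℝ × ℝ, W q
      = 2 * w (xRoot q) * w (yRoot q) * (q.1 ^ 2 - 4 * q.2) ^ (-(1/2) : ℝ)) :
    ∃ L : MvPolynomial (Fin 2) ℝ →ₗ[ℝ] ℝ, ∀ P, L P = ∫ q in omegaDom, evalP P q * W q := by
  refine ⟨⟨⟨fun P => ∫ q in omegaDom, evalP P q * W q, ?_⟩, ?_⟩, fun P => rfl⟩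
  · intro P Q
    simp only [integral_W w hwi W hW]
    rw [← integral_add (int_sq w hwi _ (evalP_cont P)) (int_sq w hwi _ (evalP_cont Q))]
    simp only [evalP_add, add_mul]
  · intro c P
    simp only [evalP_smul, mul_assoc, integral_const_mul]
    simp

/-- the explicit orthonormal basis of `V_n(W_{-1/2})` on `Ω` built
from the orthonormal polynomials `p_n` of `w`. -/
theorem stmt_2
    (w : ℝ → ℝ) (hw0 : ∀ x, 0 ≤ w x)
    (hwi : IntegrableOn w (Icc (-1:ℝ) 1))
    (hw1 : (∫ x in Icc (-1:ℝ) 1, w x) = 1)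
    (hwm : ∀ k : ℕ, IntegrableOn (fun x => x ^ k * w x) (Icc (-1:ℝ) 1))
    (p : ℕ → Polynomial ℝ) (hp : IsONPS w p)
    (W : ℝ × ℝ → ℝ)
    (hW : ∀ q : ℝ × ℝ, W q
      = 2 * w (xRoot q) * w (yRoot q) * (q.1 ^ 2 - 4 * q.2) ^ (-(1/2) : ℝ)) :
    ∃ P : ℕ → ℕ → MvPolynomial (Fin 2) ℝ,
      (∀ n k, k ≤ n → (P k n).totalDegree = n) ∧
      (∀ n k, k < n → ∀ x y : ℝ,
        evalP (P k n) (x + y, x * y)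
          = (Real.sqrt 2)⁻¹ * ((p n).eval x * (p k).eval y + (p n).eval y * (p k).eval x)) ∧
      (∀ n, ∀ x y : ℝ,
        evalP (P n n) (x + y, x * y) = (p n).eval x * (p n).eval y) ∧
      (∀ n k m j, k ≤ n → j ≤ m →
        (∫ q in omegaDom, evalP (P k n) q * evalP (P j m) q * W q)
          = if k = j ∧ n = m then 1 else 0) ∧
      (∀ n, isONBVn omegaDom W n (fun k => P k n)) ∧
      (∀ P' : ℕ → ℕ → MvPolynomial (Fin 2) ℝ,
        (∀ n k, k ≤ n → (P' k n).totalDegree = n) →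
        (∀ n k, k < n → ∀ x y : ℝ,
          evalP (P' k n) (x + y, x * y)
            = (Real.sqrt 2)⁻¹ * ((p n).eval x * (p k).eval y + (p n).eval y * (p k).eval x)) →
        (∀ n, ∀ x y : ℝ,
          evalP (P' n n) (x + y, x * y) = (p n).eval x * (p n).eval y) →
        ∀ n k, k ≤ n → P' k n = P k n) := by
  obtain ⟨L, hL⟩ := exists_L w hwi W hW
  have hB : ∀ A B : MvPolynomial (Fin 2) ℝ,
      (∫ q in omegaDom, evalP A q * evalP B q * W q) = L (A * B) := by
    intro A B
    rw [hL]
    simp only [evalP_mul]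
  have hex : ∀ k n : ℕ, ∃ R : MvPolynomial (Fin 2) ℝ, k ≤ n →
      R.totalDegree ≤ n ∧ SymRep (p n) (p k) R := by
    intro k n
    by_cases h : k ≤ n
    · obtain ⟨R, hR⟩ := exists_symRep n (p n) (p k) (hp.1 n).le ((hp.1 k).trans_le h)
      exact ⟨R, fun _ => hR⟩
    · exact ⟨0, fun h' => absurd h' h⟩
  choose S hS using hex
  have hccne : ∀ k n, cc k n ≠ 0 := by
    intro k n; unfold cc; split_ifs <;> positivity
  let P : ℕ → ℕ → MvPolynomial (Fin 2) ℝ := fun k n => cc k n • S k n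
  have hPe : ∀ n k, k ≤ n → ∀ x y : ℝ, evalP (P k n) (x + y, x * y)
      = cc k n * ((p n).eval x * (p k).eval y + (p n).eval y * (p k).eval x) := by
    intro n k h x y
    rw [evalP_smul, (hS k n h).2]
  have hPd : ∀ n k, k ≤ n → (P k n).totalDegree ≤ n := by
    intro n k h
    exact (MvPolynomial.totalDegree_smul_le _ _).trans (hS k n h).1
  have hON : ∀ n k m j, k ≤ n → j ≤ m → L (P k n * P j m) = if k = j ∧ n = m then 1 else 0 := by
    intro n k m j h1 h2
    rw [hL, integral_W w hwi W hW]
    simp only [evalP_mul, hPe n k h1, hPe m j h2]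
    have := int_four w hwi p hp n k m j
    have e : ∀ q : ℝ × ℝ, cc k n * ((p n).eval q.1 * (p k).eval q.2 + (p n).eval q.2 * (p k).eval q.1)
        * (cc j m * ((p m).eval q.1 * (p j).eval q.2 + (p m).eval q.2 * (p j).eval q.1))
        * (w q.1 * w q.2) = (cc k n * cc j m) * ((((p n).eval q.1 * (p k).eval q.2
        + (p n).eval q.2 * (p k).eval q.1) *
      ((p m).eval q.1 * (p j).eval q.2 + (p m).eval q.2 * (p j).eval q.1)) * (w q.1 * w q.2)) := by
      intro q; ring
    simp only [e]
    rw [integral_const_mul, this]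
    have s2 : (Real.sqrt 2)⁻¹ * (Real.sqrt 2)⁻¹ = 1 / 2 := by
      rw [← mul_inv, Real.mul_self_sqrt (by norm_num)]; norm_num
    by_cases hkj : k = j
    · subst hkj
      by_cases hnm : n = m
      · subst hnm
        by_cases hkn : k = n
        · subst hkn; simp [cc]; norm_num
        · simp only [cc, hkn, Ne.symm hkn, if_false, s2]; simp
      · have : ¬ (n = k ∧ k = m) := fun h => hnm (h.1.trans h.2)
        by_cases h3 : n = k
        · have h4 : k ≠ m := fun h => this ⟨h3, h⟩
          simp [hnm, h4]
        · simp [hnm, h3]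
    · by_cases h3 : n = j
      · have h4 : k ≠ m := by rintro rfl; omega
        simp [hkj, h4]
      · simp [hkj, h3]
  have hM : ∀ n, ∀ R : MvPolynomial (Fin 2) ℝ, R.totalDegree ≤ n →
      R ∈ Submodule.span ℝ {T | ∃ k m, k ≤ m ∧ m ≤ n ∧ T = P k m} := by
    intro n R hR
    refine mem_of_symRep _ n (fun f g hf hg => symRep_deg _ p ?_ n ?_ f g hf hg) R hR
    · intro i
      rw [Polynomial.degree_eq_natDegree, hp.1]
      intro h
      have := hp.2.1 i
      simp [h] at this
    · intro i hi j hj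
      wlog hij : j ≤ i generalizing i j
      · obtain ⟨T, hT, hT'⟩ := this j hj i hi (by omega)
        exact ⟨T, hT, fun x y => by rw [hT']; ring⟩
      refine ⟨(cc j i)⁻¹ • P j i, Submodule.smul_mem _ _ (Submodule.subset_span ⟨j, i, hij, hi, rfl⟩),
        fun x y => ?_⟩
      rw [evalP_smul, hPe i j hij, inv_mul_cancel_left₀ (hccne j i)]
  have hlow : ∀ n k, k ≤ n → ∀ Q : MvPolynomial (Fin 2) ℝ, Q.totalDegree < n →
      L (P k n * Q) = 0 := by
    intro n k hk Q hQ
    have := hM (n - 1) Q (by omega)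
    have hn : 0 < n := by omega
    clear hQ
    induction this using Submodule.span_induction with
    | mem T hT =>
      obtain ⟨j, m, hj, hm, rfl⟩ := hT
      rw [hON n k m j hk hj, if_neg]
      rintro ⟨_, h⟩; omega
    | zero => simp
    | add a b _ _ ha hb =>
      rw [mul_add, map_add, ha, hb, add_zero]
    | smul c a _ ha => rw [mul_smul_comm, map_smul, ha, smul_zero]
  have hdeg : ∀ n k, k ≤ n → (P k n).totalDegree = n := by
    intro n k hk
    refine le_antisymm (hPd n k hk) ?_
    by_contra h
    have h1 := hlow n k hk (P k n) (by omega)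
    rw [hON n k n k hk hk] at h1
    simp at h1
  have h2 : ∀ n k, k < n → ∀ x y : ℝ, evalP (P k n) (x + y, x * y)
      = (Real.sqrt 2)⁻¹ * ((p n).eval x * (p k).eval y + (p n).eval y * (p k).eval x) := by
    intro n k hk x y
    rw [hPe n k hk.le, cc, if_neg hk.ne]
  have h3 : ∀ n, ∀ x y : ℝ, evalP (P n n) (x + y, x * y) = (p n).eval x * (p n).eval y := by
    intro n x y
    rw [hPe n n le_rfl, cc, if_pos rfl]; ring
  refine ⟨P, hdeg, h2, h3, ?_, ?_, ?_⟩
  · intro n k m j h1 h2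
    rw [hB, hON n k m j h1 h2]
  · intro n
    refine ⟨fun k hk => ⟨hdeg n k hk, fun Q hQ => ?_⟩, ?_, ?_⟩
    · rw [hB]; exact hlow n k hk Q hQ
    · intro k hk j hj
      rw [hB, hON n k n j hk hj]; simp
    · rintro R ⟨hRd, hRo⟩
      -- split `R` into its degree `n` part and a lower part
      have hsp : ∃ A ∈ Submodule.span ℝ ((fun k => P k n) '' Set.Iic n),
          ∃ B ∈ Submodule.span ℝ {T | ∃ k m, k ≤ m ∧ m < n ∧ T = P k m}, R = A + B := by
        have h1 := hM n R hRd.le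
        have hsub : {T | ∃ k m, k ≤ m ∧ m ≤ n ∧ T = P k m} ⊆
            ((fun k => P k n) '' Set.Iic n) ∪ {T | ∃ k m, k ≤ m ∧ m < n ∧ T = P k m} := by
          rintro T ⟨k, m, hk, hm, rfl⟩
          rcases hm.eq_or_lt with rfl | hm
          · exact Or.inl ⟨k, hk, rfl⟩
          · exact Or.inr ⟨k, m, hk, hm, rfl⟩
        have h2 := Submodule.span_mono hsub h1
        rw [Submodule.span_union, Submodule.mem_sup] at h2
        obtain ⟨A, hA, B, hB, h⟩ := h2
        exact ⟨A, hA, B, hB, h.symm⟩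
      obtain ⟨A, hA, B, hBm, rfl⟩ := hsp
      have hAo : ∀ k m, k ≤ m → m < n → L (A * P k m) = 0 := by
        intro k m hk hm
        clear hRd hRo
        induction hA using Submodule.span_induction with
        | mem T hT =>
          obtain ⟨j, hj, rfl⟩ := hT
          rw [hlow n j hj _ (by rw [hdeg m k hk]; exact hm)]
        | zero => simp
        | add a b _ _ ha hb => rw [add_mul, map_add, ha, hb, add_zero]
        | smul c a _ ha => rw [smul_mul_assoc, map_smul, ha, smul_zero]
      have hBo : ∀ k m, k ≤ m → m < n → L (B * P k m) = 0 := by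
        intro k m hk hm
        have := hRo (P k m) (by rw [hdeg m k hk]; exact hm)
        rw [hB, add_mul, map_add, hAo k m hk hm, zero_add] at this
        exact this
      have hB0 : B = 0 := by
        -- Bessel: `B` equals the sum of its projections
        have hexp : B = ∑ m ∈ Finset.range n, ∑ k ∈ Finset.range (m + 1),
            L (B * P k m) • P k m := by
          clear hRd hRo hBo
          induction hBm using Submodule.span_induction with
          | mem T hT =>
            obtain ⟨j, i, hj, hi, rfl⟩ := hT
            rw [Finset.sum_eq_single_of_mem i (Finset.mem_range.2 hi),
              Finset.sum_eq_single_of_mem j (Finset.mem_range.2 (by omega)),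
              hON i j i j hj hj]
            · simp
            · intro k hk hkj
              rw [Finset.mem_range] at hk
              rw [hON i j i k hj (by omega), if_neg (by rintro ⟨h, _⟩; exact hkj h.symm), zero_smul]
            · intro m hm hmi
              refine Finset.sum_eq_zero fun k hk => ?_
              rw [Finset.mem_range] at hk
              rw [hON i j m k hj (by omega), if_neg (by rintro ⟨_, h⟩; exact hmi h.symm), zero_smul]
          | zero => simp
          | add a b _ _ ha hb =>
            simp only [add_mul, map_add, add_smul, Finset.sum_add_distrib]
            rw [← ha, ← hb]
          | smul c a _ ha =>
            simp only [smul_mul_assoc, map_smul, smul_assoc]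
            simp only [← Finset.smul_sum]
            rw [← ha]
        rw [hexp]
        refine Finset.sum_eq_zero fun m hm => Finset.sum_eq_zero fun k hk => ?_
        rw [Finset.mem_range] at hm hk
        rw [hBo k m (by omega) hm, zero_smul]
      rw [hB0, add_zero]
      exact hA
  · intro P' _ h2' h3' n k hk
    apply evalP_inj
    intro x y
    rcases hk.eq_or_lt with rfl | hk
    · rw [h3', h3]
    · rw [h2' n k hk, h2 n k hk]
end
end

section
/- For 0 ≤ k ≤ n there exists a (necessarily unique) real polynomial P_{k,n} in two variables of total degree n such that P_{k,n}(x+y, xy) = (2 a_w^{1/2})^{−1/2} (p_{n+1}(x) p_k(y) − p_{n+1}(y) p_k(x)) / (x − y) for all x ≠ y. These polynomials satisfy ∫_Ω P_{k,n}(u,v) P_{j,m}(u,v) W_{1/2}(u,v) du dv = δ_{k,j} δ_{n,m} for all 0 ≤ k ≤ n, 0 ≤ j ≤ m; in particular, for each n, {P_{k,n} : 0 ≤ k ≤ n} is an orthonormal basis of V_n(W_{1/2}). -/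
open MeasureTheory Real Set Filter
open scoped ENNReal

noncomputable section

lemma evalP_unique (P Q : MvPolynomial (Fin 2) ℝ)
    (h : ∀ x y : ℝ, x ≠ y → evalP P (x + y, x * y) = evalP Q (x + y, x * y)) : P = Q := by
  apply MvPolynomial.funext_set (![Ioo (3:ℝ) 4, Ioo (0:ℝ) 1])
  · intro i
    fin_cases i
    · exact Ioo_infinite (by norm_num)
    · exact Ioo_infinite (by norm_num)
  · intro z hz
    have h0 : z 0 ∈ Ioo (3:ℝ) 4 := hz 0 (mem_univ _)
    have h1 : z 1 ∈ Ioo (0:ℝ) 1 := hz 1 (mem_univ _)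
    have hd : 0 < (z 0)^2 - 4 * z 1 := by nlinarith [h0.1, h1.2]
    have hs := Real.sqrt_pos.2 hd
    have hs2 := Real.sq_sqrt hd.le
    have := h ((z 0 - √((z 0)^2 - 4 * z 1))/2) ((z 0 + √((z 0)^2 - 4 * z 1))/2) (by linarith)
    have e1 : (z 0 - √((z 0)^2 - 4 * z 1))/2 + (z 0 + √((z 0)^2 - 4 * z 1))/2 = z 0 := by ring
    have e2 : (z 0 - √((z 0)^2 - 4 * z 1))/2 * ((z 0 + √((z 0)^2 - 4 * z 1))/2) = z 1 := by
      linear_combination (-1/4) * hs2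
    rw [e1, e2] at this
    have e3 : ![z 0, z 1] = z := by ext i; fin_cases i <;> rfl
    simpa only [evalP, e3] using this

/-- Defining relation. -/
def isB (C : MvPolynomial (Fin 2) ℝ) (f g : Polynomial ℝ) : Prop :=
  ∀ x y : ℝ, evalP C (x + y, x * y) * (x - y) = f.eval x * g.eval y - f.eval y * g.eval x

lemma isB_unique {C D : MvPolynomial (Fin 2) ℝ} {f g : Polynomial ℝ}
    (h : isB C f g) (h' : isB D f g) : C = D := by
  apply evalP_unique
  intro x y hxy
  exact mul_right_cancel₀ (sub_ne_zero.2 hxy) ((h x y).trans (h' x y).symm)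

lemma exH (k : ℕ) : (∃ C : MvPolynomial (Fin 2) ℝ, C.totalDegree ≤ k ∧
      ∀ x y : ℝ, evalP C (x + y, x * y) * (x - y) = x^(k+1) - y^(k+1)) ∧
    (∃ C : MvPolynomial (Fin 2) ℝ, C.totalDegree ≤ k + 1 ∧
      ∀ x y : ℝ, evalP C (x + y, x * y) * (x - y) = x^(k+2) - y^(k+2)) := by
  induction k with
  | zero =>
    refine ⟨⟨1, by simp, by simp [evalP]⟩, ⟨MvPolynomial.X 0, by simp, ?_⟩⟩
    intro x y
    simp [evalP]; ring
  | succ k ih =>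
    obtain ⟨⟨C, hC, hC'⟩, ⟨D, hD, hD'⟩⟩ := ih
    refine ⟨⟨D, hD, hD'⟩, ⟨MvPolynomial.X 0 * D - MvPolynomial.X 1 * C, ?_, ?_⟩⟩
    · refine (MvPolynomial.totalDegree_sub _ _).trans (max_le ?_ ?_)
      · refine (MvPolynomial.totalDegree_mul _ _).trans ?_
        rw [MvPolynomial.totalDegree_X]; omega
      · refine (MvPolynomial.totalDegree_mul _ _).trans ?_
        rw [MvPolynomial.totalDegree_X]; omega
    · intro x y
      have h1 := hC' x y
      have h2 := hD' x y
      simp only [evalP, map_sub, map_mul, MvPolynomial.eval_X, Matrix.cons_val_zero,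
        Matrix.cons_val_one] at h1 h2 ⊢
      linear_combination (x + y) * h2 - x * y * h1

lemma exMon' (n a b : ℕ) (hab : b < a) (ha : a ≤ n + 1) :
    ∃ C : MvPolynomial (Fin 2) ℝ, C.totalDegree ≤ n ∧
      isB C (Polynomial.X ^ a) (Polynomial.X ^ b) := by
  obtain ⟨k, rfl⟩ := Nat.exists_eq_add_of_lt hab
  obtain ⟨⟨C, hC, hC'⟩, -⟩ := exH k
  refine ⟨MvPolynomial.X 1 ^ b * C, ?_, ?_⟩
  · refine (MvPolynomial.totalDegree_mul _ _).trans ?_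
    rw [MvPolynomial.totalDegree_X_pow]; omega
  · intro x y
    have h1 := hC' x y
    simp only [evalP, map_mul, map_pow, MvPolynomial.eval_X, Matrix.cons_val_zero,
        Matrix.cons_val_one, Polynomial.eval_pow, Polynomial.eval_X] at h1 ⊢
    linear_combination (x * y)^b * h1

lemma exMon (n a b : ℕ) (ha : a ≤ n + 1) (hb : b ≤ n + 1) :
    ∃ C : MvPolynomial (Fin 2) ℝ, C.totalDegree ≤ n ∧
      isB C (Polynomial.X ^ a) (Polynomial.X ^ b) := by
  rcases lt_trichotomy a b with h | h | h
  · obtain ⟨C, hC, hC'⟩ := exMon' n b a h hb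
    refine ⟨-C, by simpa using hC, fun x y => ?_⟩
    have h1 := hC' x y
    simp only [evalP, map_neg] at h1 ⊢
    linear_combination -h1
  · subst h
    refine ⟨0, by simp, fun x y => ?_⟩
    simp [evalP]; ring
  · exact exMon' n a b h ha

lemma exB (n : ℕ) (f g : Polynomial ℝ) (hf : f.natDegree ≤ n + 1) (hg : g.natDegree ≤ n + 1) :
    ∃ C : MvPolynomial (Fin 2) ℝ, C.totalDegree ≤ n ∧ isB C f g := by
  have := fun (i : Fin (n+2)) (j : Fin (n+2)) => exMon n i j (by omega) (by omega)
  choose C hC hC' using this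
  refine ⟨∑ i : Fin (n+2), ∑ j : Fin (n+2), (f.coeff i * g.coeff j) • C i j, ?_, ?_⟩
  · refine MvPolynomial.totalDegree_finsetSum_le fun i _ => ?_
    refine MvPolynomial.totalDegree_finsetSum_le fun j _ => ?_
    exact (MvPolynomial.totalDegree_smul_le _ _).trans (hC i j)
  · intro x y
    have ef : ∀ t, f.eval t = ∑ i : Fin (n+2), f.coeff i * t^(i:ℕ) := fun t => by
      rw [Polynomial.eval_eq_sum_range' (n := n+2) (by omega),
        Finset.sum_range (fun i => f.coeff i * t^i)]
    have eg : ∀ t, g.eval t = ∑ i : Fin (n+2), g.coeff i * t^(i:ℕ) := fun t => by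
      rw [Polynomial.eval_eq_sum_range' (n := n+2) (by omega),
        Finset.sum_range (fun i => g.coeff i * t^i)]
    rw [ef, ef, eg, eg, Finset.sum_mul_sum, Finset.sum_mul_sum, ← Finset.sum_sub_distrib]
    simp only [evalP, map_sum, Finset.sum_mul]
    refine Finset.sum_congr rfl fun i _ => ?_
    rw [← Finset.sum_sub_distrib]
    refine Finset.sum_congr rfl fun j _ => ?_
    have h1 := hC' i j x y
    simp only [evalP, Polynomial.eval_pow, Polynomial.eval_X, MvPolynomial.smul_eval] at h1 ⊢
    linear_combination (f.coeff i * g.coeff j) * h1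

def Bfun (f g : Polynomial ℝ) : MvPolynomial (Fin 2) ℝ :=
  (exB (max f.natDegree g.natDegree) f g (by omega) (by omega)).choose

lemma Bfun_spec (f g : Polynomial ℝ) : isB (Bfun f g) f g :=
  (exB (max f.natDegree g.natDegree) f g (by omega) (by omega)).choose_spec.2

lemma Bfun_deg (n : ℕ) (f g : Polynomial ℝ) (hf : f.natDegree ≤ n + 1)
    (hg : g.natDegree ≤ n + 1) : (Bfun f g).totalDegree ≤ n := by
  obtain ⟨C, hC, hC'⟩ := exB n f g hf hg
  rwa [isB_unique (Bfun_spec f g) hC']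

def Bl : Polynomial ℝ →ₗ[ℝ] Polynomial ℝ →ₗ[ℝ] MvPolynomial (Fin 2) ℝ :=
  LinearMap.mk₂ ℝ Bfun
    (fun f f' g => isB_unique (Bfun_spec _ _) fun x y => by
      have h1 := Bfun_spec f g x y
      have h2 := Bfun_spec f' g x y
      simp only [evalP, map_add, Polynomial.eval_add] at h1 h2 ⊢
      linear_combination h1 + h2)
    (fun c f g => isB_unique (Bfun_spec _ _) fun x y => by
      have h1 := Bfun_spec f g x y
      simp only [evalP, MvPolynomial.smul_eval, Polynomial.eval_smul, smul_eq_mul] at h1 ⊢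
      linear_combination c * h1)
    (fun f g g' => isB_unique (Bfun_spec _ _) fun x y => by
      have h1 := Bfun_spec f g x y
      have h2 := Bfun_spec f g' x y
      simp only [evalP, map_add, Polynomial.eval_add] at h1 h2 ⊢
      linear_combination h1 + h2)
    (fun c f g => isB_unique (Bfun_spec _ _) fun x y => by
      have h1 := Bfun_spec f g x y
      simp only [evalP, MvPolynomial.smul_eval, Polynomial.eval_smul, smul_eq_mul] at h1 ⊢
      linear_combination c * h1)

lemma Bl_apply (f g : Polynomial ℝ) : Bl f g = Bfun f g := rfl

lemma Bl_self (f : Polynomial ℝ) : Bl f f = 0 :=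
  isB_unique (Bfun_spec _ _) fun x y => by simp [evalP]; ring

lemma Bl_swap (f g : Polynomial ℝ) : Bl g f = - Bl f g :=
  isB_unique (Bfun_spec _ _) fun x y => by
    have h1 := Bfun_spec f g x y
    simp only [evalP, map_neg, Bl_apply] at h1 ⊢
    linear_combination -h1

lemma X0_mul_Bl (f g : Polynomial ℝ) :
    Bl f g * MvPolynomial.X 0 = Bl (Polynomial.X * f) g + Bl f (Polynomial.X * g) := by
  apply evalP_unique
  intro x y hxy
  apply mul_right_cancel₀ (sub_ne_zero.2 hxy)
  have h1 := Bfun_spec f g x y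
  have h2 := Bfun_spec (Polynomial.X * f) g x y
  have h3 := Bfun_spec f (Polynomial.X * g) x y
  simp only [evalP, Bl_apply, map_add, map_mul, MvPolynomial.eval_X, Polynomial.eval_mul,
    Polynomial.eval_X, Matrix.cons_val_zero] at h1 h2 h3 ⊢
  linear_combination (x + y) * h1 - h2 - h3

lemma X1_mul_Bl (f g : Polynomial ℝ) :
    Bl f g * MvPolynomial.X 1 = Bl (Polynomial.X * f) (Polynomial.X * g) := by
  apply evalP_unique
  intro x y hxy
  apply mul_right_cancel₀ (sub_ne_zero.2 hxy)
  have h1 := Bfun_spec f g x y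
  have h2 := Bfun_spec (Polynomial.X * f) (Polynomial.X * g) x y
  simp only [evalP, Bl_apply, map_mul, MvPolynomial.eval_X, Polynomial.eval_mul,
    Polynomial.eval_X, Matrix.cons_val_one, Matrix.cons_val_zero] at h1 h2 ⊢
  linear_combination (x * y) * h1 - h2

open Polynomial in
def SN (N : ℕ) : Submodule ℝ (MvPolynomial (Fin 2) ℝ) :=
  Submodule.map₂ Bl (Polynomial.degreeLT ℝ (N + 2)) (Polynomial.degreeLT ℝ (N + 2))

lemma X_mul_mem_degreeLT {m : ℕ} {f : Polynomial ℝ} (hf : f ∈ Polynomial.degreeLT ℝ m) :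
    Polynomial.X * f ∈ Polynomial.degreeLT ℝ (m + 1) := by
  rw [Polynomial.mem_degreeLT] at *
  by_cases h : f = 0
  · simp [h]
  · rw [← Polynomial.natDegree_lt_iff_degree_lt h] at hf
    rw [← Polynomial.natDegree_lt_iff_degree_lt (by simpa using h), Polynomial.natDegree_X_mul h]
    omega

lemma SN_mono {N M : ℕ} (h : N ≤ M) : SN N ≤ SN M :=
  Submodule.map₂_le_map₂ (Polynomial.degreeLT_mono (by omega)) (Polynomial.degreeLT_mono (by omega))

lemma SN_mul_X (N : ℕ) (i : Fin 2) (P : MvPolynomial (Fin 2) ℝ) (hP : P ∈ SN N) :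
    P * MvPolynomial.X i ∈ SN (N + 1) := by
  have : SN N ≤ (SN (N+1)).comap (LinearMap.mulRight ℝ (MvPolynomial.X i)) := by
    refine Submodule.map₂_le.2 fun f hf g hg => ?_
    have hf' := Polynomial.degreeLT_mono (R := ℝ) (show N + 2 ≤ N + 1 + 2 by omega) hf
    have hg' := Polynomial.degreeLT_mono (R := ℝ) (show N + 2 ≤ N + 1 + 2 by omega) hg
    have hf2 := X_mul_mem_degreeLT hf
    have hg2 := X_mul_mem_degreeLT hg
    rw [Submodule.mem_comap, LinearMap.mulRight_apply]
    fin_cases i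
    · simp only [Fin.zero_eta, X0_mul_Bl]
      exact add_mem (Submodule.apply_mem_map₂ _ hf2 hg') (Submodule.apply_mem_map₂ _ hf' hg2)
    · simp only [Fin.mk_one, X1_mul_Bl]
      exact Submodule.apply_mem_map₂ _ hf2 hg2
  exact this hP

lemma C_mem_SN (c : ℝ) : MvPolynomial.C c ∈ SN 0 := by
  have : MvPolynomial.C c = Bl (Polynomial.C c * Polynomial.X) 1 := by
    refine isB_unique (f := Polynomial.C c * Polynomial.X) (g := 1) ?_ (Bfun_spec _ _)
    intro x y
    simp [evalP]; ring
  rw [this]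
  refine Submodule.apply_mem_map₂ _ ?_ ?_
  · rw [Polynomial.mem_degreeLT]
    exact (Polynomial.degree_C_mul_X_le c).trans_lt (by norm_num)
  · rw [Polynomial.mem_degreeLT, Polynomial.degree_one]; norm_num

lemma mem_SN (N : ℕ) (P : MvPolynomial (Fin 2) ℝ) (hP : P.totalDegree ≤ N) : P ∈ SN N := by
  have mon : ∀ a b : ℕ, ∀ c : ℝ, MvPolynomial.C c * MvPolynomial.X 0 ^ a * MvPolynomial.X 1 ^ b
      ∈ SN (a + b) := by
    intro a b c
    induction b with
    | zero =>
      induction a with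
      | zero => simpa using C_mem_SN c
      | succ a ih =>
        have := SN_mul_X _ 0 _ ih
        simpa [pow_succ, mul_assoc] using this
    | succ b ih =>
      have := SN_mul_X _ 1 _ ih
      simpa only [pow_succ, ← mul_assoc, ← add_assoc] using this
  rw [MvPolynomial.as_sum P]
  refine Submodule.sum_mem _ fun s hs => ?_
  have h1 : s 0 + s 1 ≤ N := by
    have := (MvPolynomial.le_totalDegree hs).trans hP
    rw [Finsupp.sum_fintype _ _ (by simp)] at this
    simpa using this
  have := SN_mono h1 (mon (s 0) (s 1) (P.coeff s))
  rw [MvPolynomial.monomial_eq, Finsupp.prod_fintype _ _ (by simp)]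
  simpa [mul_assoc] using this

lemma degreeLT_le_span (p : ℕ → Polynomial ℝ) (h1 : ∀ n, (p n).natDegree = n)
    (h2 : ∀ n, 0 < (p n).leadingCoeff) (N : ℕ) :
    Polynomial.degreeLT ℝ N ≤ Submodule.span ℝ (p '' Iio N) := by
  induction N with
  | zero =>
    intro f hf
    rw [Polynomial.mem_degreeLT] at hf
    have : f = 0 := by
      simpa using hf
    simp [this]
  | succ N ih =>
    intro f hf
    have hc : (p N).coeff N ≠ 0 := by
      have := h2 N
      rw [Polynomial.leadingCoeff, h1] at this
      exact this.ne'
    have hr : f - (f.coeff N / (p N).coeff N) • p N ∈ Polynomial.degreeLT ℝ N := by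
      rw [Polynomial.mem_degreeLT, Polynomial.degree_lt_iff_coeff_zero] at *
      intro m hm
      rcases hm.eq_or_lt with rfl | hm
      · simp [hc]
      · rw [Polynomial.coeff_sub, Polynomial.coeff_smul, hf m hm,
          Polynomial.coeff_eq_zero_of_natDegree_lt (p := p N) (n := m) (by rw [h1]; exact hm)]
        simp
    have e : f = (f - (f.coeff N / (p N).coeff N) • p N) + (f.coeff N / (p N).coeff N) • p N := by
      ring
    rw [e]
    refine add_mem (Submodule.span_mono (image_mono (Iio_subset_Iio (by omega))) (ih hr)) ?_
    exact Submodule.smul_mem _ _ (Submodule.subset_span ⟨N, by simp, rfl⟩)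

lemma mem_span_Bl (p : ℕ → Polynomial ℝ) (h1 : ∀ n, (p n).natDegree = n)
    (h2 : ∀ n, 0 < (p n).leadingCoeff) (N : ℕ) (P : MvPolynomial (Fin 2) ℝ)
    (hP : P.totalDegree ≤ N) :
    P ∈ Submodule.span ℝ {C | ∃ j m, j ≤ m ∧ m ≤ N ∧ C = Bl (p (m+1)) (p j)} := by
  have h := mem_SN N P hP
  have hs := degreeLT_le_span p h1 h2 (N+2)
  have h' := Submodule.map₂_le_map₂ (f := Bl) hs hs h
  rw [Submodule.map₂_span_span] at h'
  refine Submodule.span_le.2 ?_ h'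
  rintro _ ⟨_, ⟨i, hi, rfl⟩, _, ⟨j, hj, rfl⟩, rfl⟩
  simp only [mem_Iio] at hi hj
  rcases lt_trichotomy i j with h | h | h
  · obtain ⟨m, rfl⟩ : ∃ m, j = m + 1 := ⟨j - 1, by omega⟩
    simp only [SetLike.mem_coe]
    rw [Bl_swap]
    exact neg_mem (Submodule.subset_span ⟨i, m, by omega, by omega, rfl⟩)
  · subst h
    simp [Bl_self]
  · obtain ⟨m, rfl⟩ : ∃ m, i = m + 1 := ⟨i - 1, by omega⟩
    exact Submodule.subset_span ⟨j, m, by omega, by omega, rfl⟩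

/-- The map `(x,y) ↦ (x+y, xy)`. -/
def Phi (q : ℝ × ℝ) : ℝ × ℝ := (q.1 + q.2, q.1 * q.2)

def Phi' (q : ℝ × ℝ) : ℝ × ℝ →L[ℝ] ℝ × ℝ :=
  (Matrix.toLin (.finTwoProd ℝ) (.finTwoProd ℝ) !![1, 1; q.2, q.1]).toContinuousLinearMap

lemma hasFDerivAt_Phi (q : ℝ × ℝ) : HasFDerivAt Phi (Phi' q) q := by
  unfold Phi'
  rw [Matrix.toLin_finTwoProd_toContinuousLinearMap]
  convert! HasFDerivAt.prodMk (𝕜 := ℝ)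
      ((hasFDerivAt_fst (𝕜 := ℝ) (p := q)).add (hasFDerivAt_snd (𝕜 := ℝ) (p := q)))
      ((hasFDerivAt_fst (𝕜 := ℝ) (p := q)).mul (hasFDerivAt_snd (𝕜 := ℝ) (p := q))) using 2
  · simp
  · simp [add_comm]

lemma det_Phi' (q : ℝ × ℝ) : (Phi' q).det = q.1 - q.2 := by
  unfold Phi'
  simp only [LinearMap.det_toContinuousLinearMap, LinearMap.det_toLin, Matrix.det_fin_two_of]
  ring

lemma Phi_image : omegaDom = Phi '' triDom := by
  ext q
  constructor
  · rintro ⟨x, y, h1, h2, h3, rfl⟩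
    exact ⟨(x, y), ⟨h1, h2, h3⟩, rfl⟩
  · rintro ⟨⟨x, y⟩, ⟨h1, h2, h3⟩, rfl⟩
    exact ⟨x, y, h1, h2, h3, rfl⟩

lemma sqrt_Phi (q : ℝ × ℝ) (h : q ∈ triDom) :
    √((Phi q).1 ^ 2 - 4 * (Phi q).2) = q.2 - q.1 := by
  have : (Phi q).1 ^ 2 - 4 * (Phi q).2 = (q.2 - q.1)^2 := by simp only [Phi]; ring
  rw [this, Real.sqrt_sq (by linarith [h.2.1])]

lemma xRoot_Phi (q : ℝ × ℝ) (h : q ∈ triDom) : xRoot (Phi q) = q.1 := by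
  rw [xRoot, sqrt_Phi q h]; simp only [Phi]; ring

lemma yRoot_Phi (q : ℝ × ℝ) (h : q ∈ triDom) : yRoot (Phi q) = q.2 := by
  rw [yRoot, sqrt_Phi q h]; simp only [Phi]; ring

lemma Phi_injOn : InjOn Phi triDom := by
  intro q hq r hr h
  ext
  · rw [← xRoot_Phi q hq, h, xRoot_Phi r hr]
  · rw [← yRoot_Phi q hq, h, yRoot_Phi r hr]

lemma triDom_meas : MeasurableSet triDom := by
  apply IsOpen.measurableSet
  exact (isOpen_lt continuous_const continuous_fst).inter
    ((isOpen_lt continuous_fst continuous_snd).inter (isOpen_lt continuous_snd continuous_const))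

lemma cov_pt (w : ℝ → ℝ) (a : ℝ) (W : ℝ × ℝ → ℝ)
    (hW : ∀ q : ℝ × ℝ, W q
      = 2 * a * w (xRoot q) * w (yRoot q) * (q.1 ^ 2 - 4 * q.2) ^ ((1:ℝ)/2))
    (F : ℝ × ℝ → ℝ) (q : ℝ × ℝ) (hq : q ∈ triDom) :
    |(Phi' q).det| • (F (Phi q) * W (Phi q))
      = (2 * a * F (Phi q) * (q.1 - q.2)^2) * (w q.1 * w q.2) := by
  rw [det_Phi', hW, xRoot_Phi q hq, yRoot_Phi q hq, ← Real.sqrt_eq_rpow, sqrt_Phi q hq,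
    abs_of_neg (by linarith [hq.2.1]), smul_eq_mul]
  ring

lemma cov_int (w : ℝ → ℝ) (a : ℝ) (W : ℝ × ℝ → ℝ)
    (hW : ∀ q : ℝ × ℝ, W q
      = 2 * a * w (xRoot q) * w (yRoot q) * (q.1 ^ 2 - 4 * q.2) ^ ((1:ℝ)/2))
    (F : ℝ × ℝ → ℝ) :
    ∫ q in omegaDom, F q * W q
      = ∫ q in triDom, (2 * a * F (Phi q) * (q.1 - q.2)^2) * (w q.1 * w q.2) := by
  rw [Phi_image, integral_image_eq_integral_abs_det_fderiv_smul volume triDom_meas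
    (fun q _ => (hasFDerivAt_Phi q).hasFDerivWithinAt) Phi_injOn]
  exact setIntegral_congr_fun triDom_meas fun q hq => cov_pt w a W hW F q hq

lemma cov_integrable (w : ℝ → ℝ) (a : ℝ) (W : ℝ × ℝ → ℝ)
    (hW : ∀ q : ℝ × ℝ, W q
      = 2 * a * w (xRoot q) * w (yRoot q) * (q.1 ^ 2 - 4 * q.2) ^ ((1:ℝ)/2))
    (F : ℝ × ℝ → ℝ)
    (h : IntegrableOn (fun q => (2 * a * F (Phi q) * (q.1 - q.2)^2) * (w q.1 * w q.2)) triDom) :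
    IntegrableOn (fun q => F q * W q) omegaDom := by
  rw [Phi_image, integrableOn_image_iff_integrableOn_abs_det_fderiv_smul volume triDom_meas
    (fun q _ => (hasFDerivAt_Phi q).hasFDerivWithinAt) Phi_injOn]
  exact h.congr_fun (fun q hq => (cov_pt w a W hW F q hq).symm) triDom_meas

lemma triDom_subset : triDom ⊆ sqDom := by
  rintro ⟨x, y⟩ ⟨h1, h2, h3⟩
  simp only at h1 h2 h3
  exact ⟨⟨h1.le, by simp only; linarith⟩, ⟨by simp only; linarith, h3.le⟩⟩

lemma sq_integrable (w : ℝ → ℝ) (hwi : IntegrableOn w (Icc (-1:ℝ) 1)) (G : ℝ × ℝ → ℝ)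
    (hG : Continuous G) : IntegrableOn (fun q => G q * (w q.1 * w q.2)) sqDom := by
  refine IntegrableOn.continuousOn_mul hG.continuousOn ?_ (isCompact_Icc.prod isCompact_Icc)
  rw [IntegrableOn, sqDom, Measure.volume_eq_prod, ← Measure.prod_restrict]
  exact Integrable.mul_prod hwi hwi

lemma diag_null : volume {q : ℝ × ℝ | q.1 = q.2} = 0 := by
  rw [Measure.volume_eq_prod, Measure.measure_prod_null
    (isClosed_eq continuous_fst continuous_snd).measurableSet]
  refine Filter.Eventually.of_forall fun x => ?_
  have : (Prod.mk x ⁻¹' {q : ℝ × ℝ | q.1 = q.2}) = {x} := by ext y; simp [eq_comm]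
  simp only [this]; simp

lemma sq_symm (H : ℝ × ℝ → ℝ) (hs : ∀ q, H q.swap = H q) (hi : IntegrableOn H sqDom) :
    ∫ q in sqDom, H q = 2 * ∫ q in triDom, H q := by
  have h1 : sqDom =ᵐ[volume] (Ioo (-1:ℝ) 1 ×ˢ Ioo (-1:ℝ) 1) :=
    (Measure.set_prod_ae_eq Ioo_ae_eq_Icc Ioo_ae_eq_Icc).symm
  have h2 : (Ioo (-1:ℝ) 1 ×ˢ Ioo (-1:ℝ) 1) =ᵐ[volume] (triDom ∪ Prod.swap ⁻¹' triDom : Set (ℝ×ℝ)) := by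
    have hd : ∀ᵐ q : ℝ × ℝ, q.1 ≠ q.2 := by
      rw [ae_iff]; simpa using diag_null
    rw [eventuallyEq_set]
    filter_upwards [hd] with q hq
    simp only [mem_prod, mem_Ioo, mem_union, triDom, mem_preimage, mem_ofPred_eq, Prod.fst_swap,
      Prod.snd_swap]
    constructor
    · rintro ⟨⟨h1, h2⟩, h3, h4⟩
      rcases lt_or_gt_of_ne hq with h | h
      · exact Or.inl ⟨h1, h, h4⟩
      · exact Or.inr ⟨h3, h, h2⟩
    · rintro (⟨h1, h2, h3⟩ | ⟨h1, h2, h3⟩)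
      · exact ⟨⟨h1, by linarith⟩, by linarith, h3⟩
      · exact ⟨⟨by linarith, h3⟩, h1, by linarith⟩
  have hm : MeasurableSet (Prod.swap ⁻¹' triDom : Set (ℝ × ℝ)) := measurable_swap triDom_meas
  have hsw : MeasurePreserving (Prod.swap : ℝ × ℝ → ℝ × ℝ) volume volume :=
    Measure.measurePreserving_swap
  have h3 : ∫ q in Prod.swap ⁻¹' triDom, H q = ∫ q in triDom, H q := by
    have := hsw.setIntegral_preimage_emb MeasurableEquiv.prodComm.measurableEmbedding H triDom
    rw [← this]
    simp only [hs]
  rw [setIntegral_congr_set (h1.trans h2), setIntegral_union ?_ hm ?_ ?_, h3]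
  · ring
  · rw [Set.disjoint_left]
    rintro q h h'
    exact absurd h.2.1 (not_lt.2 h'.2.1.le)
  · exact hi.mono_set triDom_subset
  · refine hi.mono_set ?_
    rintro q hq
    have := triDom_subset hq
    exact ⟨this.2, this.1⟩

lemma evalP_Phi_cont (P : MvPolynomial (Fin 2) ℝ) : Continuous fun q => evalP P (Phi q) := by
  have h : Continuous fun q : ℝ × ℝ => (![(Phi q).1, (Phi q).2] : Fin 2 → ℝ) := by
    apply continuous_pi
    intro i
    fin_cases i <;> simp [Phi] <;> fun_prop
  exact (MvPolynomial.continuous_eval P).comp h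

lemma int4 {A B C D : ℝ × ℝ → ℝ} {s : Set (ℝ × ℝ)} (hA : IntegrableOn A s)
    (hB : IntegrableOn B s) (hC : IntegrableOn C s) (hD : IntegrableOn D s) :
    ∫ q in s, (A q + B q) - (C q + D q)
      = ((∫ q in s, A q) + ∫ q in s, B q) - ((∫ q in s, C q) + ∫ q in s, D q) := by
  rw [← integral_add hA hB, ← integral_add hC hD]
  exact integral_sub (hA.add hB) (hC.add hD)

lemma form_integrable (w : ℝ → ℝ) (hwi : IntegrableOn w (Icc (-1:ℝ) 1)) (a : ℝ) (W : ℝ × ℝ → ℝ)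
    (hW : ∀ q : ℝ × ℝ, W q
      = 2 * a * w (xRoot q) * w (yRoot q) * (q.1 ^ 2 - 4 * q.2) ^ ((1:ℝ)/2))
    (P Q : MvPolynomial (Fin 2) ℝ) :
    IntegrableOn (fun q => evalP P q * evalP Q q * W q) omegaDom := by
  refine cov_integrable w a W hW (fun q => evalP P q * evalP Q q) ?_
  refine (sq_integrable w hwi
    (fun q => 2 * a * (evalP P (Phi q) * evalP Q (Phi q)) * (q.1 - q.2)^2) ?_).mono_set triDom_subset
  have := evalP_Phi_cont P
  have := evalP_Phi_cont Q
  fun_prop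

lemma form_Bl (w : ℝ → ℝ) (hwi : IntegrableOn w (Icc (-1:ℝ) 1)) (a : ℝ) (W : ℝ × ℝ → ℝ)
    (hW : ∀ q : ℝ × ℝ, W q
      = 2 * a * w (xRoot q) * w (yRoot q) * (q.1 ^ 2 - 4 * q.2) ^ ((1:ℝ)/2))
    (f g f' g' : Polynomial ℝ) :
    ∫ q in omegaDom, evalP (Bl f g) q * evalP (Bl f' g') q * W q
      = 2 * a * ((∫ x in Icc (-1:ℝ) 1, f.eval x * f'.eval x * w x)
          * (∫ x in Icc (-1:ℝ) 1, g.eval x * g'.eval x * w x)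
        - (∫ x in Icc (-1:ℝ) 1, f.eval x * g'.eval x * w x)
          * (∫ x in Icc (-1:ℝ) 1, g.eval x * f'.eval x * w x)) := by
  rw [cov_int w a W hW (fun q => evalP (Bl f g) q * evalP (Bl f' g') q)]
  have key : ∀ f g f' g' : Polynomial ℝ, 
      IntegrableOn (fun q : ℝ × ℝ => (f.eval q.1 * f'.eval q.1 * w q.1) * (g.eval q.2 * g'.eval q.2 * w q.2)) sqDom ∧
      ∫ q in sqDom, (f.eval q.1 * f'.eval q.1 * w q.1) * (g.eval q.2 * g'.eval q.2 * w q.2)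
        = (∫ x in Icc (-1:ℝ) 1, f.eval x * f'.eval x * w x)
          * (∫ x in Icc (-1:ℝ) 1, g.eval x * g'.eval x * w x) := by
    intro f g f' g'
    constructor
    · have := sq_integrable w hwi (fun q => f.eval q.1 * f'.eval q.1 * (g.eval q.2 * g'.eval q.2))
        (by fun_prop)
      refine this.congr_fun (fun q _ => ?_) (measurableSet_Icc.prod measurableSet_Icc)
      simp only
      ring
    · rw [← setIntegral_prod_mul]; rfl
  set H : ℝ × ℝ → ℝ := fun q => 
    (f.eval q.1 * g.eval q.2 - f.eval q.2 * g.eval q.1) *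
      (f'.eval q.1 * g'.eval q.2 - f'.eval q.2 * g'.eval q.1) * (w q.1 * w q.2) with hH
  have hHi : IntegrableOn H sqDom := sq_integrable w hwi
    (fun q => (f.eval q.1 * g.eval q.2 - f.eval q.2 * g.eval q.1) *
      (f'.eval q.1 * g'.eval q.2 - f'.eval q.2 * g'.eval q.1)) (by fun_prop)
  have hHs := sq_symm H (fun q => by simp only [hH, Prod.fst_swap, Prod.snd_swap]; ring) hHi
  have e1 : ∀ q : ℝ × ℝ, 2 * a * (evalP (Bl f g) (Phi q) * evalP (Bl f' g') (Phi q))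
      * (q.1 - q.2)^2 * (w q.1 * w q.2) = 2 * a * H q := by
    intro q
    have h1 := Bfun_spec f g q.1 q.2
    have h2 := Bfun_spec f' g' q.1 q.2
    simp only [hH, ← h1, ← h2, Bl_apply, Phi]
    ring
  simp only [e1]
  rw [integral_const_mul]
  have e2 : ∀ q : ℝ × ℝ, H q = 
      ((f.eval q.1 * f'.eval q.1 * w q.1) * (g.eval q.2 * g'.eval q.2 * w q.2)
      + (g.eval q.1 * g'.eval q.1 * w q.1) * (f.eval q.2 * f'.eval q.2 * w q.2))
      - ((f.eval q.1 * g'.eval q.1 * w q.1) * (g.eval q.2 * f'.eval q.2 * w q.2)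
      + (g.eval q.1 * f'.eval q.1 * w q.1) * (f.eval q.2 * g'.eval q.2 * w q.2)) := by
    intro q; simp only [hH]; ring
  have e3 : ∫ q in sqDom, H q = 2 * ((∫ x in Icc (-1:ℝ) 1, f.eval x * f'.eval x * w x)
          * (∫ x in Icc (-1:ℝ) 1, g.eval x * g'.eval x * w x)
        - (∫ x in Icc (-1:ℝ) 1, f.eval x * g'.eval x * w x)
          * (∫ x in Icc (-1:ℝ) 1, g.eval x * f'.eval x * w x)) := by
    have k1 := key f g f' g'
    have k2 := key g f g' f'
    have k3 := key f g g' f'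
    have k4 := key g f f' g'
    simp only [e2]
    rw [int4 k1.1 k2.1 k3.1 k4.1, k1.2, k2.2, k3.2, k4.2]
    ring
  rw [e3] at hHs
  linear_combination -a * hHs

/-- The bilinear form. -/
def form (w : ℝ → ℝ) (hwi : IntegrableOn w (Icc (-1:ℝ) 1)) (a : ℝ) (W : ℝ × ℝ → ℝ)
    (hW : ∀ q : ℝ × ℝ, W q
      = 2 * a * w (xRoot q) * w (yRoot q) * (q.1 ^ 2 - 4 * q.2) ^ ((1:ℝ)/2))
    : MvPolynomial (Fin 2) ℝ →ₗ[ℝ] MvPolynomial (Fin 2) ℝ →ₗ[ℝ] ℝ :=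
  LinearMap.mk₂ ℝ (fun P Q => ∫ q in omegaDom, evalP P q * evalP Q q * W q)
    (fun P P' Q => by
      rw [← integral_add (form_integrable w hwi a W hW P Q) (form_integrable w hwi a W hW P' Q)]
      simp only [evalP, map_add, add_mul])
    (fun c P Q => by
      rw [smul_eq_mul, ← integral_const_mul]
      simp only [evalP, MvPolynomial.smul_eval, mul_assoc])
    (fun P Q Q' => by
      rw [← integral_add (form_integrable w hwi a W hW P Q) (form_integrable w hwi a W hW P Q')]
      simp only [evalP, map_add, add_mul, mul_add])
    (fun c P Q => by
      rw [smul_eq_mul, ← integral_const_mul]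
      simp only [evalP, MvPolynomial.smul_eval, mul_assoc, mul_left_comm])

lemma form_apply (w : ℝ → ℝ) (hwi : IntegrableOn w (Icc (-1:ℝ) 1)) (a : ℝ) (W : ℝ × ℝ → ℝ)
    (hW : ∀ q : ℝ × ℝ, W q
      = 2 * a * w (xRoot q) * w (yRoot q) * (q.1 ^ 2 - 4 * q.2) ^ ((1:ℝ)/2))
    (P Q : MvPolynomial (Fin 2) ℝ) : form w hwi a W hW P Q =
    ∫ q in omegaDom, evalP P q * evalP Q q * W q := rfl

/-- the explicit orthonormal basis of `V_n(W_{1/2})` on `Ω` built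
from the orthonormal polynomials `p_n` of `w`. -/
theorem stmt_3
    (w : ℝ → ℝ) (hw0 : ∀ x, 0 ≤ w x)
    (hwi : IntegrableOn w (Icc (-1:ℝ) 1))
    (hw1 : (∫ x in Icc (-1:ℝ) 1, w x) = 1)
    (hwm : ∀ k : ℕ, IntegrableOn (fun x => x ^ k * w x) (Icc (-1:ℝ) 1))
    (p : ℕ → Polynomial ℝ) (hp : IsONPS w p)
    (a : ℝ) (ha0 : 0 < a)
    (ha : (∫ q in sqDom, a * w q.1 * w q.2 * (q.1 - q.2) ^ 2) = 1)
    (W : ℝ × ℝ → ℝ)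
    (hW : ∀ q : ℝ × ℝ, W q
      = 2 * a * w (xRoot q) * w (yRoot q) * (q.1 ^ 2 - 4 * q.2) ^ ((1:ℝ)/2)) :
    ∃ P : ℕ → ℕ → MvPolynomial (Fin 2) ℝ,
      (∀ n k, k ≤ n → (P k n).totalDegree = n) ∧
      (∀ n k, k ≤ n → ∀ x y : ℝ, x ≠ y →
        evalP (P k n) (x + y, x * y)
          = (Real.sqrt (2 * a))⁻¹
            * (((p (n+1)).eval x * (p k).eval y - (p (n+1)).eval y * (p k).eval x)
                / (x - y))) ∧
      (∀ n k m j, k ≤ n → j ≤ m →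
        (∫ q in omegaDom, evalP (P k n) q * evalP (P j m) q * W q)
          = if k = j ∧ n = m then 1 else 0) ∧
      (∀ n, isONBVn omegaDom W n (fun k => P k n)) ∧
      (∀ P' : ℕ → ℕ → MvPolynomial (Fin 2) ℝ,
        (∀ n k, k ≤ n → (P' k n).totalDegree = n) →
        (∀ n k, k ≤ n → ∀ x y : ℝ, x ≠ y →
          evalP (P' k n) (x + y, x * y)
            = (Real.sqrt (2 * a))⁻¹
              * (((p (n+1)).eval x * (p k).eval y - (p (n+1)).eval y * (p k).eval x)
                  / (x - y))) →
        ∀ n k, k ≤ n → P' k n = P k n) := by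
  obtain ⟨hp1, hp2, hp3⟩ := hp
  set c : ℝ := (√(2 * a))⁻¹ with hc
  have hc2 : c * c * (2 * a) = 1 := by
    have h0 : 0 < √(2 * a) := Real.sqrt_pos.2 (by linarith)
    have h1 : √(2 * a) * √(2 * a) = 2 * a := Real.mul_self_sqrt (by linarith)
    rw [← h1, hc]
    field_simp
  have hc0 : c ≠ 0 := by
    intro h
    rw [h] at hc2
    simp at hc2
  set P : ℕ → ℕ → MvPolynomial (Fin 2) ℝ := fun k n => c • Bl (p (n+1)) (p k) with hP
  set β := form w hwi a W hW with hβ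
  have orth : ∀ n k m j, k ≤ n → j ≤ m → β (P k n) (P j m) = if k = j ∧ n = m then 1 else 0 := by
    intro n k m j hk hj
    have h1 : β (Bl (p (n+1)) (p k)) (Bl (p (m+1)) (p j)) = _ :=
      form_Bl w hwi a W hW (p (n+1)) (p k) (p (m+1)) (p j)
    rw [hp3, hp3, hp3, hp3] at h1
    simp only [hP, map_smul, LinearMap.smul_apply, h1, smul_eq_mul]
    have h2 : ¬ (n + 1 = j ∧ k = m + 1) := by omega
    by_cases e1 : k = j <;> by_cases e2 : n = m
    · subst e1 e2
      rw [if_neg (show ¬ n + 1 = k by omega)]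
      simp
      linear_combination hc2
    · rw [if_neg (show ¬ n + 1 = m + 1 by omega), if_neg (show ¬ (k = j ∧ n = m) from fun h => e2 h.2)]
      by_cases e3 : n + 1 = j
      · rw [if_neg (show ¬ k = m + 1 by omega)]; simp
      · rw [if_neg e3]; simp
    · rw [if_neg (show ¬ k = j by omega), if_neg (show ¬ (k = j ∧ n = m) from fun h => e1 h.1)]
      by_cases e3 : n + 1 = j
      · rw [if_neg (show ¬ k = m + 1 by omega)]; simp
      · rw [if_neg e3]; simp
    · rw [if_neg (show ¬ k = j by omega), if_neg (show ¬ (k = j ∧ n = m) from fun h => e1 h.1)]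
      by_cases e3 : n + 1 = j
      · rw [if_neg (show ¬ k = m + 1 by omega)]; simp
      · rw [if_neg e3]; simp
  have span : ∀ N (Q : MvPolynomial (Fin 2) ℝ), Q.totalDegree ≤ N →
      Q ∈ Submodule.span ℝ {C | ∃ j m, j ≤ m ∧ m ≤ N ∧ C = P j m} := by
    intro N Q hQ
    refine Submodule.span_le.2 ?_ (mem_span_Bl p hp1 hp2 N Q hQ)
    rintro _ ⟨j, m, hj, hm, rfl⟩
    have e : Bl (p (m+1)) (p j) = c⁻¹ • P j m := by
      simp only [hP, smul_smul, inv_mul_cancel₀ hc0, one_smul]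
    simp only [SetLike.mem_coe]
    rw [e]
    exact Submodule.smul_mem _ _ (Submodule.subset_span ⟨j, m, hj, hm, rfl⟩)
  have lowOrth : ∀ n k, k ≤ n → ∀ Q : MvPolynomial (Fin 2) ℝ, Q.totalDegree < n →
      β (P k n) Q = 0 := by
    intro n k hk Q hQ
    have h1 := span (n - 1) Q (by omega)
    have h2 : Submodule.span ℝ {C | ∃ j m, j ≤ m ∧ m ≤ n - 1 ∧ C = P j m}
        ≤ LinearMap.ker (β (P k n)) := by
      refine Submodule.span_le.2 ?_
      rintro _ ⟨j, m, hj, hm, rfl⟩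
      simp only [SetLike.mem_coe, LinearMap.mem_ker]
      rw [orth n k m j hk hj, if_neg (by omega)]
    exact h2 h1
  have deg : ∀ n k, k ≤ n → (P k n).totalDegree = n := by
    intro n k hk
    apply le_antisymm
    · refine (MvPolynomial.totalDegree_smul_le _ _).trans ?_
      exact Bfun_deg n _ _ (hp1 _).le (by rw [hp1]; omega)
    · by_contra h
      have h1 := lowOrth n k hk (P k n) (by omega)
      rw [orth n k n k hk hk] at h1
      simp at h1
  have val : ∀ n k, k ≤ n → ∀ x y : ℝ, x ≠ y →
        evalP (P k n) (x + y, x * y)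
          = c * (((p (n+1)).eval x * (p k).eval y - (p (n+1)).eval y * (p k).eval x)
                / (x - y)) := by
    intro n k _ x y hxy
    rw [← Bfun_spec (p (n+1)) (p k) x y, mul_div_cancel_right₀ _ (sub_ne_zero.2 hxy)]
    simp only [hP, evalP, MvPolynomial.smul_eval, Bl_apply]
  refine ⟨P, deg, val, orth, ?_, ?_⟩
  · intro n
    refine ⟨fun k hk => ⟨deg n k hk, fun Q hQ => lowOrth n k hk Q hQ⟩, ?_, ?_⟩
    · intro k hk j hj
      have := orth n k n j hk hj
      simp only [and_true] at this
      exact this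
    · rintro R ⟨hR1, hR2⟩
      have key : ∀ Q ∈ Submodule.span ℝ {C | ∃ j m, j ≤ m ∧ m ≤ n ∧ C = P j m},
          Q = ∑ m ∈ Finset.range (n+1), ∑ j ∈ Finset.range (m+1), β Q (P j m) • P j m := by
        intro Q hQ
        induction hQ using Submodule.span_induction with
        | mem Q hQ =>
          obtain ⟨j, m, hj, hm, rfl⟩ := hQ
          rw [Finset.sum_eq_single m, Finset.sum_eq_single j]
          · rw [orth m j m j hj hj]; simp
          · intro b hb hbj
            rw [orth m j m b hj (by simp at hb; omega), if_neg (fun h => hbj h.1.symm), zero_smul]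
          · intro h; simp at h; omega
          · intro b hb hbm
            refine Finset.sum_eq_zero fun i hi => ?_
            rw [orth m j b i hj (by simp at hi; omega), if_neg (fun h => hbm h.2.symm), zero_smul]
          · intro h; simp at h; omega
        | zero => simp
        | add x y _ _ hx hy =>
          simp only [map_add, LinearMap.add_apply, add_smul, Finset.sum_add_distrib]
          rw [← hx, ← hy]
        | smul r x _ hx =>
          simp only [map_smul, LinearMap.smul_apply, smul_eq_mul, mul_smul, ← Finset.smul_sum]
          rw [← hx]
      rw [key R (span n R hR1.le)]
      refine Submodule.sum_mem _ fun m hm => Submodule.sum_mem _ fun j hj => ?_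
      simp only [Finset.mem_range] at hm hj
      by_cases h : m = n
      · subst h
        exact Submodule.smul_mem _ _ (Submodule.subset_span ⟨j, by simp; omega, rfl⟩)
      · have h0 : β R (P j m) = 0 := hR2 (P j m) (by rw [deg m j (by omega)]; omega)
        rw [h0, zero_smul]
        exact zero_mem _
  · intro P' _ h2 n k hk
    apply evalP_unique
    intro x y hxy
    rw [h2 n k hk x y hxy, val n k hk x y hxy]
end
end
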